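/- arXiv:math/0011137 — 4 statements merged into one kernel-verified Lean document; each statement's English description precedes it below -/
import Mathlib

section
/- Let V = ⊕_{p=0}^k V_{2p} be a finite-dimensional graded ℂ-vector space with dim V₀ = 1, and let {e₀,…,e_m} be a basis of homogeneous elements with e₀ ∈ V₀. Let φ₀ ∈ ℂ[z₀,…,z_m] be a cubic form such that every monomial z_a z_b z_c occurring with nonzero coefficient satisfies deg e_a + deg e_b + deg e_c = 2k, and write φ_{abc} := ∂³φ₀/∂z_a∂z_b∂z_c (constants). Suppose the symmetric matrix g_{ab} := φ_{0ab} is invertible, so that B(e_a,e_b) := g_{ab} defines a nondegenerate symmetric bilinear form on V, with B-dual basis e_a^B = Σ_b h_{ba}e_b (B(e_a^B,e_b) = δ_{ab}), and suppose Σ_{d,f} φ_{abd}·h_{df}·φ_{fcg} = Σ_{d,f} φ_{bcd}·h_{df}·φ_{afg} for all a,b,c,g. Then the bilinear product defined on the basis by e_a * e_b := Σ_c φ_{abc}·e_c^B makes (V,*,e₀,B) a graded Frobenius algebra of weight k. -/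
/-!
Third partial derivatives `φ a b c` of a `C³` function are totally symmetric, and the definition
of the product through the `B`-dual family says exactly that `B (e a * e b) (e c) = φ a b c`.
Since `B` is nondegenerate, identities in `V` may be checked after pairing with the basis, where
they become statements about `φ`: commutativity and invariance are its symmetry, the unit law is
the definition of `B`, and associativity is the WDVV relation.

For the grading, the weight condition makes `B` vanish on pieces of non-complementary degrees.
Nondegeneracy then lets the degree of a vector be read off from its pairings, and the weight
condition for `e a * e b` gives degree `d a + d b`.
-/

open Module

noncomputable section

/-- A graded Frobenius algebra of weight `k` over `ℂ`: a finite-dimensional commutative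
associative `ℂ`-algebra `(V, mul)` with unit `e₀`, a nondegenerate symmetric bilinear form `B`
with `B (u*v) w = B u (v*w)`, and a direct sum decomposition `V = ⊕_{p=0}^k V_{2p}` (here
`W p` plays the role of `V_{2p}`, and `W p = ⊥` for `p > k`) with `dim V₀ = 1`, `e₀ ∈ V₀`,
`V_{2p} * V_{2q} ⊆ V_{2(p+q)}`, and `B(V_{2p}, V_{2q}) = 0` for `p + q ≠ k`. -/
structure IsGradedFrobenius {V : Type*} [AddCommGroup V] [Module ℂ V]
    (k : ℕ) (W : ℕ → Submodule ℂ V)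
    (mul : V →ₗ[ℂ] V →ₗ[ℂ] V) (e₀ : V) (B : V →ₗ[ℂ] V →ₗ[ℂ] ℂ) : Prop where
  finite : FiniteDimensional ℂ V
  comm : ∀ u v : V, mul u v = mul v u
  assoc : ∀ u v w : V, mul (mul u v) w = mul u (mul v w)
  one_mul : ∀ v : V, mul e₀ v = v
  symm : ∀ u v : V, B u v = B v u
  nondeg : ∀ u : V, (∀ v : V, B u v = 0) → u = 0
  frob : ∀ u v w : V, B (mul u v) w = B u (mul v w)
  internal : DirectSum.IsInternal W
  bounded : ∀ p : ℕ, k < p → W p = ⊥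
  dim_bottom : Module.finrank ℂ (W 0) = 1
  unit_mem : e₀ ∈ W 0
  mul_mem : ∀ p q : ℕ, ∀ u ∈ W p, ∀ v ∈ W q, mul u v ∈ W (p + q)
  orthogonal : ∀ p q : ℕ, p + q ≠ k → ∀ u ∈ W p, ∀ v ∈ W q, B u v = 0

/-- The partial derivative `∂f/∂z_a` of a scalar function of finitely many complex
variables, as a directional derivative. -/
def pd {ι : Type*} [Fintype ι] [DecidableEq ι] (a : ι) (f : (ι → ℂ) → ℂ) :
    (ι → ℂ) → ℂ :=
  fun z => fderiv ℂ f z (Pi.single a 1)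

section PartialDerivatives

variable {ι : Type*} [Fintype ι] [DecidableEq ι] {f : (ι → ℂ) → ℂ} {z : ι → ℂ}

theorem pd_pd_eq_fderiv_fderiv (hf : DifferentiableAt ℂ (fderiv ℂ f) z) (a b : ι) :
    pd a (pd b f) z = fderiv ℂ (fderiv ℂ f) z (Pi.single a 1) (Pi.single b 1) := by
  unfold pd
  rw [fderiv_clm_apply hf (differentiableAt_const _)]
  simp

theorem pd_pd_comm (hf : ContDiffAt ℂ 2 f z) (a b : ι) : pd a (pd b f) z = pd b (pd a f) z := by
  have hf' : DifferentiableAt ℂ (fderiv ℂ f) z :=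
    (hf.fderiv_right (m := 1) (by norm_num)).differentiableAt one_ne_zero
  rw [pd_pd_eq_fderiv_fderiv hf', pd_pd_eq_fderiv_fderiv hf']
  exact (hf.isSymmSndFDerivAt (by simp)).eq _ _

theorem contDiffAt_pd {m n : WithTop ℕ∞} (hf : ContDiffAt ℂ n f z) (hmn : m + 1 ≤ n) (a : ι) :
    ContDiffAt ℂ m (pd a f) z :=
  (hf.fderiv_right hmn).clm_apply contDiffAt_const

theorem pd_pd_pd_comm_left (hf : ContDiffAt ℂ 3 f z) (a b c : ι) :
    pd a (pd b (pd c f)) z = pd b (pd a (pd c f)) z :=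
  pd_pd_comm (contDiffAt_pd hf (by norm_num) c) a b

theorem pd_pd_pd_comm_right (hf : ContDiffAt ℂ 3 f z) (a b c : ι) :
    pd a (pd b (pd c f)) z = pd a (pd c (pd b f)) z := by
  have hnear : pd b (pd c f) =ᶠ[nhds z] pd c (pd b f) :=
    (hf.eventually (by decide)).mono fun _ hy => pd_pd_comm (hy.of_le (by norm_num)) b c
  exact DFunLike.congr_fun hnear.fderiv_eq (Pi.single a 1)

end PartialDerivatives

theorem contDiff_cubicForm {ι : Type*} [Fintype ι] {n : WithTop ℕ∞}
    (coef : ι → ι → ι → ℂ) :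
    ContDiff ℂ n fun z : ι → ℂ => ∑ a, ∑ b, ∑ c, coef a b c * z a * z b * z c := by
  fun_prop

section DualFamily

variable {R V ι : Type*} [CommSemiring R] [AddCommMonoid V] [Module R V] [DecidableEq ι]

/-- The family `eB` is dual to the basis `e` with respect to the bilinear form `B`, in the first
argument of `B`. -/
def IsDualFamily (B : V →ₗ[R] V →ₗ[R] R) (e : Basis ι R V) (eB : ι → V) : Prop :=
  ∀ a b, B (eB a) (e b) = if a = b then 1 else 0

namespace IsDualFamily

variable {B : V →ₗ[R] V →ₗ[R] R} {e : Basis ι R V} {eB : ι → V}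

theorem apply_eq_coord (hdual : IsDualFamily B e eB) (a : ι) : B (eB a) = e.coord a :=
  e.ext fun b => by simp [hdual a b, Finsupp.single_apply, eq_comm]

theorem injective (hdual : IsDualFamily B e eB) (hsymm : ∀ u v, B u v = B v u) :
    Function.Injective B := fun u v huv =>
  e.ext_elem fun a => by
    rw [← e.coord_apply, ← e.coord_apply, ← hdual.apply_eq_coord, hsymm, huv, hsymm]

theorem linearMap_apply_eq_sum [Fintype ι] (hdual : IsDualFamily B e eB)
    (hsymm : ∀ u v, B u v = B v u) {h : ι → ι → R} (hh : ∀ a, eB a = ∑ b, h b a • e b)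
    (F : V →ₗ[R] R) (v : V) : F v = ∑ x, ∑ f, B v (e x) * h x f * F (e f) := by
  have hrepr (f : ι) : e.repr v f = ∑ x, B v (e x) * h x f := by
    rw [← e.coord_apply, ← hdual.apply_eq_coord, hh]
    simp [hsymm v, mul_comm]
  calc F v = ∑ f, e.repr v f * F (e f) := by
        conv_lhs => rw [← e.sum_repr v, map_sum]
        simp only [map_smul, smul_eq_mul]
    _ = ∑ x, ∑ f, B v (e x) * h x f * F (e f) := by
        rw [Finset.sum_comm]
        simp only [hrepr, Finset.sum_mul]

end IsDualFamily

end DualFamily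

section StructureConstants

variable {R V ι : Type*} [CommSemiring R] [AddCommMonoid V] [Module R V]

/-- The structure constants of the product `mul` in the basis `e`, with the upper index lowered
by the bilinear form `B`, are `φ`. -/
def HasStructureConstants (mul : V →ₗ[R] V →ₗ[R] V) (B : V →ₗ[R] V →ₗ[R] R) (e : Basis ι R V)
    (φ : ι → ι → ι → R) : Prop :=
  ∀ a b c, B (mul (e a) (e b)) (e c) = φ a b c

theorem IsDualFamily.hasStructureConstants [Fintype ι] [DecidableEq ι]
    {B : V →ₗ[R] V →ₗ[R] R} {e : Basis ι R V} {eB : ι → V} (hdual : IsDualFamily B e eB)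
    {mul : V →ₗ[R] V →ₗ[R] V} {φ : ι → ι → ι → R}
    (hmul : ∀ a b, mul (e a) (e b) = ∑ c, φ a b c • eB c) :
    HasStructureConstants mul B e φ := fun a b c => by
  simp [hmul, hdual _ c]

namespace HasStructureConstants

variable {mul : V →ₗ[R] V →ₗ[R] V} {B : V →ₗ[R] V →ₗ[R] R} {e : Basis ι R V}
  {φ : ι → ι → ι → R}

theorem comm (hφ : HasStructureConstants mul B e φ) (hB : Function.Injective B)
    (hφ_symm : ∀ a b c, φ a b c = φ b a c) (u v : V) : mul u v = mul v u := by
  have hflip : mul = mul.flip := LinearMap.ext_basis e e fun a b => hB <| e.ext fun c => by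
    rw [LinearMap.flip_apply, hφ, hφ, hφ_symm]
  exact LinearMap.congr_fun₂ hflip u v

theorem one_mul (hφ : HasStructureConstants mul B e φ) (hB : Function.Injective B) {o : ι}
    (hφ_unit : ∀ a b, φ o a b = B (e a) (e b)) (v : V) : mul (e o) v = v := by
  have hid : mul (e o) = LinearMap.id := e.ext fun a => hB <| e.ext fun b => by
    rw [hφ, hφ_unit, LinearMap.id_apply]
  exact LinearMap.congr_fun hid v

theorem frob (hφ : HasStructureConstants mul B e φ) (hsymm : ∀ u v, B u v = B v u)
    (hφ_cyclic : ∀ a b c, φ a b c = φ b c a) (u v w : V) : B (mul u v) w = B u (mul v w) := by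
  have htri : mul.compr₂ B = (LinearMap.llcomp R V V R).compl₁₂ B mul :=
    LinearMap.ext_basis e e fun a b => e.ext fun c => by
      simp only [LinearMap.compr₂_apply, LinearMap.compl₁₂_apply, LinearMap.llcomp_apply]
      rw [hsymm (e a), hφ, hφ, hφ_cyclic]
  exact LinearMap.congr_fun (LinearMap.congr_fun₂ htri u v) w

theorem assoc [Fintype ι] [DecidableEq ι] (hφ : HasStructureConstants mul B e φ)
    (hsymm : ∀ u v, B u v = B v u) {eB : ι → V} (hdual : IsDualFamily B e eB)
    {h : ι → ι → R} (hh : ∀ a, eB a = ∑ b, h b a • e b)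
    (hwdvv : ∀ a b c g, ∑ x, ∑ f, φ a b x * h x f * φ f c g = ∑ x, ∑ f, φ b c x * h x f * φ a f g)
    (u v w : V) : mul (mul u v) w = mul u (mul v w) := by
  have hbasis (a b c : ι) : mul (mul (e a) (e b)) (e c) = mul (e a) (mul (e b) (e c)) := by
    refine hdual.injective hsymm <| e.ext fun g => ?_
    have hleft := hdual.linearMap_apply_eq_sum hsymm hh (B.flip (e g) ∘ₗ mul.flip (e c))
      (mul (e a) (e b))
    have hright := hdual.linearMap_apply_eq_sum hsymm hh (B.flip (e g) ∘ₗ mul (e a))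
      (mul (e b) (e c))
    simp only [LinearMap.comp_apply, LinearMap.flip_apply, hφ _ _ _] at hleft hright
    rw [hleft, hright, hwdvv]
  have htri : mul.compr₂ mul = (LinearMap.llcomp R V V V).compl₁₂ mul mul :=
    LinearMap.ext_basis e e fun a b => e.ext fun c => hbasis a b c
  exact LinearMap.congr_fun (LinearMap.congr_fun₂ htri u v) w

end HasStructureConstants

end StructureConstants

section Grading

variable {κ R V : Type*} [DecidableEq κ]

section Orthogonality

variable [CommSemiring R] [AddCommMonoid V] [Module R V] {W : κ → Submodule R V}
  {B : V →ₗ[R] V →ₗ[R] R} {k : κ}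

theorem mem_of_forall_orthogonal [Add κ] [IsRightCancelAdd κ] (hW : DirectSum.IsInternal W)
    (hB : Function.Injective B)
    (horth : ∀ p q, p + q ≠ k → ∀ u ∈ W p, ∀ v ∈ W q, B u v = 0)
    {r : κ} {x : V} (hx : ∀ q, r + q ≠ k → ∀ v ∈ W q, B x v = 0) : x ∈ W r := by
  let _ := hW.chooseDecomposition
  have hproj (q : κ) (hq : r + q = k) (v : V) (hv : v ∈ W q) (y : V) :
      B y v = B (DirectSum.decompose W y r) v := by
    induction y using DirectSum.Decomposition.inductionOn W with
    | zero => simp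
    | add y y' hy hy' => simp [hy, hy']
    | @homogeneous p y =>
      by_cases hp : p = r
      · subst hp
        simp
      · have hpq : p + q ≠ k := fun hpq => hp (add_right_cancel (hpq.trans hq.symm))
        rw [horth p q hpq y y.2 v hv, DirectSum.decompose_of_mem_ne W y.2 hp]
        simp
  have hcomponent : B x = B (DirectSum.decompose W x r) := by
    refine DirectSum.decompose_lhom_ext W fun q => LinearMap.ext fun v => ?_
    by_cases hq : r + q = k
    · exact hproj q hq v v.2 x
    · exact (hx q hq v v.2).trans (horth r q hq _ (SetLike.coe_mem _) v v.2).symm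
  exact hB hcomponent ▸ SetLike.coe_mem _

end Orthogonality

section HomogeneousBasis

variable {ι M : Type*} [Ring R] [AddCommGroup V] [Module R V] [AddCommMonoid M] [Module R M]
  {W : κ → Submodule R V} {e : Basis ι R V} {d : ι → κ}

theorem span_homogeneous_basis_eq (hW : DirectSum.IsInternal W) (hdeg : ∀ a, e a ∈ W (d a))
    (p : κ) : Submodule.span R (e '' {a | d a = p}) = W p := by
  have hle : (fun p => Submodule.span R (e '' {a | d a = p})) ≤ W := fun p =>
    Submodule.span_le.2 <| by rintro _ ⟨a, rfl, rfl⟩; exact hdeg a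
  have htop : ⨆ p, Submodule.span R (e '' {a | d a = p}) = ⊤ := by
    rw [eq_top_iff, ← e.span_eq, Submodule.span_le]
    rintro _ ⟨a, rfl⟩
    exact Submodule.mem_iSup_of_mem (d a) (Submodule.subset_span ⟨a, rfl, rfl⟩)
  exact congrFun ((hW.submodule_iSupIndep.le_iff_eq_of_iSup_eq_top htop).1 hle) p

theorem map_mem_of_homogeneous_basis (hW : DirectSum.IsInternal W) (hdeg : ∀ a, e a ∈ W (d a))
    {p : κ} (f : V →ₗ[R] M) (N : Submodule R M) (hf : ∀ a, d a = p → f (e a) ∈ N)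
    {u : V} (hu : u ∈ W p) : f u ∈ N := by
  have hspan : Submodule.span R (e '' {a | d a = p}) ≤ N.comap f :=
    Submodule.span_le.2 <| by rintro _ ⟨a, ha, rfl⟩; exact hf a ha
  exact hspan (span_homogeneous_basis_eq hW hdeg p ▸ hu)

end HomogeneousBasis

variable {ι : Type*} [CommRing R] [AddCommGroup V] [Module R V] {W : κ → Submodule R V}
  {B : V →ₗ[R] V →ₗ[R] R} {e : Basis ι R V} {d : ι → κ} {k : κ}

theorem orthogonal_of_homogeneous_basis [Add κ] (hW : DirectSum.IsInternal W)
    (hdeg : ∀ a, e a ∈ W (d a)) (horth : ∀ a b, d a + d b ≠ k → B (e a) (e b) = 0)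
    (p q : κ) (hpq : p + q ≠ k) (u : V) (hu : u ∈ W p) (v : V) (hv : v ∈ W q) : B u v = 0 := by
  refine map_mem_of_homogeneous_basis hW hdeg (B.flip v) ⊥ (fun a ha => ?_) hu
  refine map_mem_of_homogeneous_basis hW hdeg (B (e a)) ⊥ (fun b hb => ?_) hv
  exact horth a b (ha ▸ hb ▸ hpq)

theorem HasStructureConstants.mul_mem [Add κ] [IsRightCancelAdd κ]
    {mul : V →ₗ[R] V →ₗ[R] V} {φ : ι → ι → ι → R} (hφ : HasStructureConstants mul B e φ)
    (hB : Function.Injective B) (hW : DirectSum.IsInternal W) (hdeg : ∀ a, e a ∈ W (d a))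
    (horth : ∀ p q, p + q ≠ k → ∀ u ∈ W p, ∀ v ∈ W q, B u v = 0)
    (hweight : ∀ a b c, φ a b c ≠ 0 → d a + d b + d c = k)
    (p q : κ) (u : V) (hu : u ∈ W p) (v : V) (hv : v ∈ W q) : mul u v ∈ W (p + q) := by
  refine map_mem_of_homogeneous_basis hW hdeg (mul.flip v) _ (fun a ha => ?_) hu
  refine map_mem_of_homogeneous_basis hW hdeg (mul (e a)) _ (fun b hb => ?_) hv
  subst ha hb
  refine mem_of_forall_orthogonal hW hB horth fun s hs w hw => ?_
  refine map_mem_of_homogeneous_basis hW hdeg (B (mul (e a) (e b))) ⊥ (fun c hc => ?_) hw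
  subst hc
  exact (hφ a b c).trans (not_imp_comm.1 (hweight a b c) hs)

end Grading

theorem statement3_general {V ι : Type*} [AddCommGroup V] [Module ℂ V] [Fintype ι] [DecidableEq ι]
    (k : ℕ) (W : ℕ → Submodule ℂ V) (hinternal : DirectSum.IsInternal W)
    (hbounded : ∀ p : ℕ, k < p → W p = ⊥) (hdim : Module.finrank ℂ (W 0) = 1)
    (e : Basis ι ℂ V) (d : ι → ℕ) (hdeg : ∀ a, e a ∈ W (d a)) (o : ι) (hd0 : d o = 0)
    (Φ : (ι → ℂ) → ℂ) (z : ι → ℂ) (hΦ : ContDiffAt ℂ 3 Φ z)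
    (hweight : ∀ a b c, pd a (pd b (pd c Φ)) z ≠ 0 → d a + d b + d c = k)
    (B : V →ₗ[ℂ] V →ₗ[ℂ] ℂ) (hB : ∀ a b, B (e a) (e b) = pd o (pd a (pd b Φ)) z)
    (eB : ι → V) (hdual : IsDualFamily B e eB)
    (h : ι → ι → ℂ) (hh : ∀ a, eB a = ∑ b, h b a • e b)
    (hassoc : ∀ a b c g,
      ∑ x, ∑ f, pd a (pd b (pd x Φ)) z * h x f * pd f (pd c (pd g Φ)) z =
        ∑ x, ∑ f, pd b (pd c (pd x Φ)) z * h x f * pd a (pd f (pd g Φ)) z)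
    (mul : V →ₗ[ℂ] V →ₗ[ℂ] V)
    (hmul : ∀ a b, mul (e a) (e b) = ∑ c, pd a (pd b (pd c Φ)) z • eB c) :
    IsGradedFrobenius k W mul (e o) B := by
  have hleft := pd_pd_pd_comm_left hΦ
  have hright := pd_pd_pd_comm_right hΦ
  have hφ : HasStructureConstants mul B e fun a b c => pd a (pd b (pd c Φ)) z :=
    hdual.hasStructureConstants hmul
  have hsymm : ∀ u v, B u v = B v u := LinearMap.congr_fun₂ <|
    LinearMap.ext_basis (B' := B.flip) e e fun a b => by
      rw [LinearMap.flip_apply, hB, hB, hright]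
  have hinj := hdual.injective hsymm
  have horth := orthogonal_of_homogeneous_basis (B := B) (k := k) hinternal hdeg fun a b hab => by
    rw [hB]
    exact not_imp_comm.1 (hweight o a b) (by rwa [hd0, zero_add])
  exact
    { finite := Module.Finite.of_basis e
      comm := hφ.comm hinj hleft
      assoc := hφ.assoc hsymm hdual hh hassoc
      one_mul := hφ.one_mul hinj fun a b => (hB a b).symm
      symm := hsymm
      nondeg := fun u hu => hinj <| (LinearMap.ext hu).trans (map_zero B).symm
      frob := hφ.frob hsymm fun a b c => (hleft a b c).trans (hright b a c)
      internal := hinternal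
      bounded := hbounded
      dim_bottom := hdim
      unit_mem := hd0 ▸ hdeg o
      mul_mem := hφ.mul_mem hinj hinternal hdeg horth hweight
      orthogonal := horth }

/-- converse of Theorem `thm:prod_pot`: Let `V = ⊕_{p=0}^k V_{2p}` be a graded
vector space (`W p` plays the role of `V_{2p}`) with `dim V₀ = 1`, `{e₀,…,e_m}` a homogeneous
basis with `e₀ ∈ V₀`, and `Φ` a cubic form (a polynomial `Σ c_{abc} z_a z_b z_c`) which is
weighted homogeneous of degree `2k`: every monomial `z_a z_b z_c` with nonzero coefficient —
equivalently every nonvanishing third partial `φ_{abc} := ∂³Φ/∂z_a∂z_b∂z_c` (a constant) —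
satisfies `deg e_a + deg e_b + deg e_c = 2k`.  If the matrix `g_{ab} := φ_{0ab}` is invertible,
`B` is the bilinear form with `B(e_a,e_b) = g_{ab}` (with `B`-dual basis
`e_a^B = Σ_b h_{ba} e_b`), and the associativity relations
`Σ_{d,f} φ_{abd} h_{df} φ_{fcg} = Σ_{d,f} φ_{bcd} h_{df} φ_{afg}` hold, then the bilinear
product with `e_a * e_b = Σ_c φ_{abc} e_c^B` makes `(V,*,e₀,B)` a graded Frobenius algebra of
weight `k`. -/
theorem statement3 {V : Type*} [AddCommGroup V] [Module ℂ V]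
    (k m : ℕ) (W : ℕ → Submodule ℂ V)
    -- the graded vector space structure
    (hinternal : DirectSum.IsInternal W)
    (hbounded : ∀ p : ℕ, k < p → W p = ⊥)
    (hdim : Module.finrank ℂ (W 0) = 1)
    -- the homogeneous basis, with `e 0 = e₀ ∈ V₀`
    (e : Basis (Fin (m + 1)) ℂ V) (d : Fin (m + 1) → ℕ)
    (hdeg : ∀ a, e a ∈ W (d a)) (hd0 : d 0 = 0)
    -- `Φ` is a cubic form
    (Φ : (Fin (m + 1) → ℂ) → ℂ)
    (hcubic : ∃ coef : Fin (m + 1) → Fin (m + 1) → Fin (m + 1) → ℂ,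
      ∀ z : Fin (m + 1) → ℂ, Φ z = ∑ a, ∑ b, ∑ c, coef a b c * z a * z b * z c)
    -- weighted homogeneity of degree 2k
    (hweight : ∀ a b c : Fin (m + 1),
      pd a (pd b (pd c Φ)) 0 ≠ 0 → 2 * d a + 2 * d b + 2 * d c = 2 * k)
    -- the matrix `g_{ab} = φ_{0ab}` is invertible
    (hg : IsUnit (Matrix.det (Matrix.of fun a b : Fin (m + 1) =>
      pd 0 (pd a (pd b Φ)) 0)))
    -- `B` is the bilinear form defined by `B(e_a, e_b) = g_{ab}`
    (B : V →ₗ[ℂ] V →ₗ[ℂ] ℂ)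
    (hB : ∀ a b : Fin (m + 1), B (e a) (e b) = pd 0 (pd a (pd b Φ)) 0)
    -- the B-dual basis `eB` and the matrix `h` with `eB a = Σ_b h b a • e b`
    (eB : Fin (m + 1) → V)
    (heB : ∀ a b, B (eB a) (e b) = if a = b then 1 else 0)
    (h : Fin (m + 1) → Fin (m + 1) → ℂ)
    (hh : ∀ a, eB a = ∑ b, h b a • e b)
    -- the associativity (WDVV) relations
    (hassoc : ∀ a b c g : Fin (m + 1),
      (∑ d' : Fin (m + 1), ∑ f : Fin (m + 1),
        pd a (pd b (pd d' Φ)) 0 * h d' f * pd f (pd c (pd g Φ)) 0) =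
      (∑ d' : Fin (m + 1), ∑ f : Fin (m + 1),
        pd b (pd c (pd d' Φ)) 0 * h d' f * pd a (pd f (pd g Φ)) 0))
    -- the product defined on the basis by `e_a * e_b = Σ_c φ_{abc} e_c^B`
    (mul : V →ₗ[ℂ] V →ₗ[ℂ] V)
    (hmul : ∀ a b : Fin (m + 1),
      mul (e a) (e b) = ∑ c, pd a (pd b (pd c Φ)) 0 • eB c) :
    IsGradedFrobenius k W mul (e 0) B := by
  obtain ⟨coef, hΦ⟩ := hcubic
  obtain rfl : Φ = _ := funext hΦ
  exact statement3_general k W hinternal hbounded hdim e d hdeg 0 hd0 _ 0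
    (contDiff_cubicForm coef).contDiffAt
    (fun a b c hne => by have := hweight a b c hne; omega) B hB eB heB h hh hassoc mul hmul
end
end

section
/- Let V = ⊕_{p=0}^4 V^p be a finite-dimensional graded ℂ-vector space, Q a nondegenerate symmetric bilinear form on V with Q(V^p,V^q) = 0 whenever p+q ≠ 4, and N₁,…,N_r pairwise commuting endomorphisms of V such that N_j(V^p) ⊆ V^{p−1} for all p (with V^{−1} := 0) and Q(N_j u, v) + Q(u, N_j v) = 0 for all u,v ∈ V and all j. Assume dim V^4 = 1, fix a nonzero e₀ ∈ V^4 and e₀* ∈ V^0 with Q(e₀, e₀*) = 1, and assume that N₁(e₀),…,N_r(e₀) form a basis of V^3. Define the grading V_{2a} := V^{4−a} (a = 0,…,4) and the bilinear form B by B(u,v) := (−1)^a Q(u,v) for u ∈ V_{2a}, v ∈ V. Then there exists a unique product * on V such that (V,*,e₀,B) is a graded Frobenius algebra of weight 4 (for the grading V = ⊕_{a=0}^4 V_{2a}) satisfying: (i) N_j(e₀) * v = N_j(v) for all v ∈ V and all j = 1,…,r; and (ii) v₁ * v₂ = B(v₁,v₂)·e₀* for all v₁,v₂ ∈ V^2.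 -/
open Module

noncomputable section

/-!
Reindexing by `a = 4 - p` turns the `N j` into operators of degree one, and the sign in `B` turns
skew-adjointness for `Q` into self-adjointness for `B`.

Let `L : V → End V` send `e₀` to the identity and `N j e₀` to `N j`, and vanish in degrees at least
two. Multiplication by an element of degree at most one must be given by `L`, the products of two
elements of degree two are prescribed, and all other products vanish for degree reasons. This
proves uniqueness and leads to the formula
`u * v = L u v + L v u - L u (L v e₀) + B u₂ v₂ • e₀*`,
where `u₂`, `v₂` are the components of degree two. It is symmetric because the `L u` commute, and
it equals `L u v` when `u` has degree at most one, because then `L u e₀ = u`. Associativity in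
degrees `(p, q, s)` with `p, s ≤ 1` is the commutativity of `L u` and `L w`. The only other case
with total degree at most four and no factor in degree zero is, up to symmetry, `(1, 1, 2)`, where
both products lie in `W 4 = R e₀*` and are compared by pairing with `e₀`. Finally
`B u v = B (u * v) e₀`, so the Frobenius identity follows from associativity.
-/

section GradedPairing

variable {R V : Type*} [CommRing R] [AddCommGroup V] [Module R V]
  {k : ℕ} {W : ℕ → Submodule R V} {B Q : LinearMap.BilinForm R V}

/-- A nondegenerate symmetric bilinear form pairing degree `p` with degree `k - p` only.
That `W` is a grading is not part of the notion. -/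
structure IsGradedPairing (k : ℕ) (W : ℕ → Submodule R V) (B : LinearMap.BilinForm R V) :
    Prop where
  symm : B.IsSymm
  separatingLeft : B.SeparatingLeft
  orthogonal : ∀ p q, p + q ≠ k → ∀ u ∈ W p, ∀ v ∈ W q, B u v = 0

lemma IsGradedPairing.eq_bot_of_lt [DirectSum.Decomposition W] (hB : IsGradedPairing k W B)
    {p : ℕ} (hp : k < p) : W p = ⊥ := by
  refine (Submodule.eq_bot_iff _).mpr fun u hu => hB.separatingLeft u fun v => ?_
  induction v using DirectSum.Decomposition.inductionOn W with
  | zero => exact map_zero _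
  | homogeneous v => exact hB.orthogonal _ _ (by omega) u hu _ v.2
  | add v v' hv hv' => rw [map_add, hv, hv', add_zero]

lemma IsGradedPairing.eq_smul_of_mem_top [DirectSum.Decomposition W] (hB : IsGradedPairing k W B)
    {e₀ e₀s : V} (h₀ : W 0 = Submodule.span R {e₀}) (he₀s : e₀s ∈ W k) (hpair : B e₀ e₀s = 1)
    {x : V} (hx : x ∈ W k) : x = B x e₀ • e₀s := by
  refine sub_eq_zero.mp (hB.separatingLeft _ fun v => ?_)
  induction v using DirectSum.Decomposition.inductionOn W with
  | zero => exact map_zero _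
  | add y z hy hz => rw [map_add, hy, hz, add_zero]
  | @homogeneous p v =>
  obtain rfl | hp := eq_or_ne p 0
  · obtain ⟨c, hc⟩ := Submodule.mem_span_singleton.mp (h₀.le v.2)
    simp [← hc, hB.symm.eq e₀s, hpair]
  · exact hB.orthogonal k p (by omega) _ (sub_mem hx ((W k).smul_mem _ he₀s)) v v.2

/-- `B` is `Q` multiplied by `(-1) ^ a` on the elements of degree `a` in the first argument. -/
def IsSignTwist (W : ℕ → Submodule R V) (Q B : LinearMap.BilinForm R V) : Prop :=
  ∀ a, ∀ u ∈ W a, ∀ v, B u v = (-1) ^ a * Q u v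

namespace IsSignTwist

lemma orthogonal (hBQ : IsSignTwist W Q B) (hQ : IsGradedPairing k W Q) {p q : ℕ}
    (hpq : p + q ≠ k) {u v : V} (hu : u ∈ W p) (hv : v ∈ W q) : B u v = 0 := by
  rw [hBQ p u hu, hQ.orthogonal p q hpq u hu v hv, mul_zero]

variable [DirectSum.Decomposition W]

lemma isSymm (hBQ : IsSignTwist W Q B) (hk : Even k) (hQ : IsGradedPairing k W Q) :
    B.IsSymm := by
  refine ⟨fun u v => ?_⟩
  induction u using DirectSum.Decomposition.inductionOn W with
  | zero => simp
  | add x y hx hy => simp [hx, hy]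
  | @homogeneous p u =>
  induction v using DirectSum.Decomposition.inductionOn W with
  | zero => simp
  | add x y hx hy => simp [hx, hy]
  | @homogeneous q v =>
  by_cases hpq : p + q = k
  · have hparity : Even p ↔ Even q := Nat.even_add.mp (hpq ▸ hk)
    rw [hBQ p u u.2, hBQ q v v.2, neg_one_pow_congr hparity, hQ.symm.eq]
  · rw [hBQ.orthogonal hQ hpq u.2 v.2, hBQ.orthogonal hQ (by omega) v.2 u.2]

lemma isGradedPairing (hBQ : IsSignTwist W Q B) (hk : Even k) (hQ : IsGradedPairing k W Q) :
    IsGradedPairing k W B where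
  symm := hBQ.isSymm hk hQ
  separatingLeft u hu := by
    refine hQ.separatingLeft u fun v => ?_
    induction v using DirectSum.Decomposition.inductionOn W with
    | zero => exact map_zero _
    | add x y hx hy => rw [map_add, hx, hy, add_zero]
    | @homogeneous q v =>
    have h : (-1) ^ q * Q v u = 0 := by rw [← hBQ q v v.2, (hBQ.isSymm hk hQ).eq, hu]
    rwa [hQ.symm.eq, ← (isUnit_neg_one.pow q).mul_right_eq_zero]
  orthogonal _ _ hpq _ hu _ hv := hBQ.orthogonal hQ hpq hu hv

lemma isSelfAdjoint (hBQ : IsSignTwist W Q B) {f : Module.End R V}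
    (hf : ∀ p, ∀ u ∈ W p, f u ∈ W (p + 1)) (hskew : Q.IsSkewAdjoint f) :
    B.IsSelfAdjoint f := by
  intro u v
  induction u using DirectSum.Decomposition.inductionOn W with
  | zero => simp
  | add x y hx hy => simp [hx, hy]
  | @homogeneous p u =>
  calc B (f u) v = (-1) ^ (p + 1) * Q (f u) v := hBQ (p + 1) _ (hf p u u.2) v
    _ = (-1) ^ (p + 1) * Q u (-f v) := by rw [hskew u v, Pi.neg_apply]
    _ = (-1) ^ p * Q u (f v) := by rw [map_neg, pow_succ]; ring
    _ = B u (f v) := (hBQ p u u.2 _).symm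

end IsSignTwist

end GradedPairing

section ReverseGrading

variable {R V : Type*} [CommRing R] [AddCommGroup V] [Module R V]
  {k : ℕ} {U : ℕ → Submodule R V} {B Q : LinearMap.BilinForm R V}

/-- The family `U 0, …, U k` in the opposite order, extended by zero in degrees above `k`. -/
def reverseGrading (k : ℕ) (U : ℕ → Submodule R V) : ℕ → Submodule R V :=
  fun a => if a ≤ k then U (k - a) else ⊥

lemma reverseGrading_of_le {a : ℕ} (ha : a ≤ k) : reverseGrading k U a = U (k - a) :=
  if_pos ha

lemma reverseGrading_of_lt {a : ℕ} (ha : k < a) : reverseGrading k U a = ⊥ :=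
  if_neg ha.not_ge

lemma isInternal_reverseGrading (hU : DirectSum.IsInternal U) (hbot : ∀ p, k < p → U p = ⊥) :
    DirectSum.IsInternal (reverseGrading k U) := by
  let f : ℕ → ℕ := fun a => if a ≤ k then k - a else a
  have hf : Function.Involutive f := fun a => by grind
  have hUf : reverseGrading k U = U ∘ f := by
    funext a
    obtain ha | ha := le_or_gt a k
    · simp [reverseGrading_of_le ha, f, ha]
    · simp [reverseGrading_of_lt ha, f, ha.not_ge, hbot a ha]
  rw [DirectSum.isInternal_submodule_iff_iSupIndep_and_iSup_eq_top, hUf]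
  exact ⟨hU.submodule_iSupIndep.comp hf.injective,
    (hf.surjective.iSup_comp U).trans hU.submodule_iSup_eq_top⟩

lemma IsGradedPairing.reverseGrading (hQ : IsGradedPairing k U Q) :
    IsGradedPairing k (reverseGrading k U) Q where
  symm := hQ.symm
  separatingLeft := hQ.separatingLeft
  orthogonal p q hpq u hu v hv := by
    obtain hp | hp := lt_or_ge k p
    · rw [reverseGrading_of_lt hp, Submodule.mem_bot] at hu
      simp [hu]
    obtain hq | hq := lt_or_ge k q
    · rw [reverseGrading_of_lt hq, Submodule.mem_bot] at hv
      simp [hv]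
    rw [reverseGrading_of_le hp] at hu
    rw [reverseGrading_of_le hq] at hv
    exact hQ.orthogonal _ _ (by omega) u hu v hv

lemma isSignTwist_reverseGrading_iff :
    IsSignTwist (reverseGrading k U) Q B ↔
      ∀ a : Fin (k + 1), ∀ u ∈ U (k - a), ∀ v, B u v = (-1) ^ (a : ℕ) * Q u v := by
  refine ⟨fun h a u hu => h a u ?_, fun h a u hu v => ?_⟩
  · rwa [reverseGrading_of_le a.is_le]
  · obtain ha | ha := le_or_gt a k
    · rw [reverseGrading_of_le ha] at hu
      exact h ⟨a, Nat.lt_succ_of_le ha⟩ u hu v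
    · rw [reverseGrading_of_lt ha, Submodule.mem_bot] at hu
      simp [hu]

lemma map_mem_reverseGrading {f : Module.End R V} (hf : ∀ p, ∀ v ∈ U (p + 1), f v ∈ U p)
    (hf₀ : ∀ v ∈ U 0, f v = 0) {a : ℕ} {v : V} (hv : v ∈ reverseGrading k U a) :
    f v ∈ reverseGrading k U (a + 1) := by
  obtain ha | rfl | ha := lt_trichotomy a k
  · rw [reverseGrading_of_le ha.le, show k - a = k - (a + 1) + 1 by omega] at hv
    rw [reverseGrading_of_le ha]
    exact hf _ v hv
  · rw [reverseGrading_of_le le_rfl, Nat.sub_self] at hv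
    simp [hf₀ v hv]
  · rw [reverseGrading_of_lt ha, Submodule.mem_bot] at hv
    simp [hv]

end ReverseGrading

section LowDegreeAction

variable {R V ι : Type*} [CommRing R] [AddCommGroup V] [Module R V]
  {W : ℕ → Submodule R V} {B : LinearMap.BilinForm R V} {e₀ : V}

/-- `L u` is a candidate for the multiplication by `u` with unit `e₀` when `u` has degree at most
one. In higher degrees `L` is set to zero, so that it is linear on all of `V`. -/
structure IsLowDegreeAction (W : ℕ → Submodule R V) (B : LinearMap.BilinForm R V) (e₀ : V)
    (L : V →ₗ[R] Module.End R V) : Prop where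
  map_unit : L e₀ = 1
  apply_unit : ∀ p ≤ 1, ∀ u ∈ W p, L u e₀ = u
  eq_zero : ∀ p, 2 ≤ p → ∀ u ∈ W p, L u = 0
  map_mem : ∀ p q, ∀ u ∈ W p, ∀ v ∈ W q, L u v ∈ W (p + q)
  commute : ∀ u v, Commute (L u) (L v)
  isSelfAdjoint : ∀ u, B.IsSelfAdjoint (L u)

variable [DirectSum.Decomposition W]

/-- The linear map `V → End V` which is `ε` times the identity plus, on the component of degree
one, the linear extension of `b j ↦ N j`; here `ε` is to be the coefficient of the unit. -/
def lowDegreeAction (ε : Module.Dual R V) (b : Basis ι R (W 1)) (N : ι → Module.End R V) :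
    V →ₗ[R] Module.End R V :=
  ε.smulRight 1 + b.constr R N ∘ₗ DirectSum.component R ℕ (fun p => W p) 1 ∘ₗ
    (DirectSum.decomposeLinearEquiv W).toLinearMap

variable {ε : Module.Dual R V} {b : Basis ι R (W 1)} {N : ι → Module.End R V}

lemma lowDegreeAction_apply (u : V) :
    lowDegreeAction ε b N u = ε u • 1 + b.constr R N (DirectSum.decompose W u 1) :=
  rfl

lemma lowDegreeAction_of_ne_one {p : ℕ} (hp : p ≠ 1) {u : V} (hu : u ∈ W p) :
    lowDegreeAction ε b N u = ε u • 1 := by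
  have hu₁ : DirectSum.decompose W u 1 = 0 := Subtype.ext (DirectSum.decompose_of_mem_ne W hu hp)
  rw [lowDegreeAction_apply, hu₁, map_zero, add_zero]

lemma lowDegreeAction_of_mem_one (hε : ∀ u ∈ W 1, ε u = 0) {u : V} (hu : u ∈ W 1) :
    lowDegreeAction ε b N u = b.constr R N ⟨u, hu⟩ := by
  have hu₁ : DirectSum.decompose W u 1 = ⟨u, hu⟩ :=
    Subtype.ext (DirectSum.decompose_of_mem_same W hu)
  rw [lowDegreeAction_apply, hε u hu, zero_smul, zero_add, hu₁]

lemma lowDegreeAction_basis (hε : ∀ u ∈ W 1, ε u = 0) (j : ι) :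
    lowDegreeAction ε b N (b j) = N j := by
  rw [lowDegreeAction_of_mem_one hε (b j).2, Subtype.coe_eta, Basis.constr_basis]

lemma lowDegreeAction_mem {S : Submodule R (Module.End R V)} (h1 : 1 ∈ S) (hN : ∀ j, N j ∈ S)
    (u : V) : lowDegreeAction ε b N u ∈ S := by
  have hconstr : LinearMap.range (b.constr R N) ≤ S := by
    rw [Basis.constr_range, Submodule.span_le]
    exact Set.range_subset_iff.mpr hN
  exact S.add_mem (S.smul_mem _ h1) (hconstr ⟨_, rfl⟩)

lemma commute_lowDegreeAction (hN : ∀ i j, Commute (N i) (N j)) (u v : V) :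
    Commute (lowDegreeAction ε b N u) (lowDegreeAction ε b N v) := by
  have hcommute {f : Module.End R V} (hf : ∀ j, Commute f (N j)) (u : V) :
      Commute f (lowDegreeAction ε b N u) :=
    lowDegreeAction_mem (S := (Subalgebra.centralizer R {f}).toSubmodule)
      (one_mem (Subalgebra.centralizer R {f})) (fun j => by rintro _ rfl; exact hf j) u f rfl
  exact hcommute (fun j => (hcommute (hN j) u).symm) v

lemma lowDegreeAction_apply_unit (hε : ∀ u ∈ W 1, ε u = 0) (hb : ∀ j, N j e₀ = b j) {u : V}
    (hu : u ∈ W 1) : lowDegreeAction ε b N u e₀ = u := by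
  have h : LinearMap.applyₗ e₀ ∘ₗ b.constr R N = (W 1).subtype :=
    b.ext fun j => by simp [hb]
  rw [lowDegreeAction_of_mem_one hε hu]
  exact LinearMap.congr_fun h ⟨u, hu⟩

lemma lowDegreeAction_map_mem (hε : ∀ p ≠ 0, ∀ u ∈ W p, ε u = 0)
    (hN : ∀ j p, ∀ v ∈ W p, N j v ∈ W (p + 1)) {p q : ℕ} {u v : V} (hu : u ∈ W p)
    (hv : v ∈ W q) : lowDegreeAction ε b N u v ∈ W (p + q) := by
  obtain rfl | hp := eq_or_ne p 1
  · have hconstr : LinearMap.range (b.constr R N) ≤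
        (W (1 + q)).comap (LinearMap.applyₗ v) := by
      rw [Basis.constr_range, Submodule.span_le, add_comm]
      exact Set.range_subset_iff.mpr fun j => hN j q v hv
    rw [lowDegreeAction_of_mem_one (hε 1 one_ne_zero) hu]
    exact hconstr ⟨_, rfl⟩
  · rw [lowDegreeAction_of_ne_one hp hu]
    obtain rfl | hp₀ := eq_or_ne p 0
    · simpa using (W q).smul_mem (ε u) hv
    · simp [hε p hp₀ u hu]

lemma isLowDegreeAction_lowDegreeAction (h₀ : W 0 = Submodule.span R {e₀}) (hε₀ : ε e₀ = 1)
    (hε : ∀ p ≠ 0, ∀ u ∈ W p, ε u = 0) (hb : ∀ j, N j e₀ = b j)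
    (hcomm : ∀ i j, Commute (N i) (N j)) (hdeg : ∀ j p, ∀ v ∈ W p, N j v ∈ W (p + 1))
    (hadj : ∀ j, B.IsSelfAdjoint (N j)) :
    IsLowDegreeAction W B e₀ (lowDegreeAction ε b N) := by
  have he₀ : e₀ ∈ W 0 := h₀ ▸ Submodule.mem_span_singleton_self e₀
  have hunit : lowDegreeAction ε b N e₀ = 1 := by
    rw [lowDegreeAction_of_ne_one zero_ne_one he₀, hε₀, one_smul]
  refine
    { map_unit := hunit
      apply_unit := fun p hp u hu => ?_
      eq_zero := fun p hp u hu => ?_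
      map_mem := fun p q u hu v hv => lowDegreeAction_map_mem hε hdeg hu hv
      commute := commute_lowDegreeAction hcomm
      isSelfAdjoint := lowDegreeAction_mem (S := B.selfAdjointSubmodule)
        LinearMap.isAdjointPair_one hadj }
  · obtain rfl | rfl := Nat.le_one_iff_eq_zero_or_eq_one.mp hp
    · obtain ⟨c, rfl⟩ := Submodule.mem_span_singleton.mp (h₀.le hu)
      simp [hunit]
    · exact lowDegreeAction_apply_unit (hε 1 one_ne_zero) hb hu
  · rw [lowDegreeAction_of_ne_one (by omega) hu, hε p (by omega) u hu, zero_smul]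

end LowDegreeAction

section FrobeniusProduct

variable {R V : Type*} [CommRing R] [AddCommGroup V] [Module R V]
  {W : ℕ → Submodule R V} {B : LinearMap.BilinForm R V} {e₀ e₀s : V}

/-- The conditions in `IsGradedFrobenius` which involve the product, over any commutative ring. -/
structure IsFrobeniusProduct (W : ℕ → Submodule R V) (B : LinearMap.BilinForm R V) (e₀ : V)
    (mul : V →ₗ[R] V →ₗ[R] V) : Prop where
  comm : ∀ u v, mul u v = mul v u
  assoc : ∀ u v w, mul (mul u v) w = mul u (mul v w)
  one_mul : ∀ v, mul e₀ v = v
  frob : ∀ u v w, B (mul u v) w = B u (mul v w)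
  mul_mem : ∀ p q, ∀ u ∈ W p, ∀ v ∈ W q, mul u v ∈ W (p + q)

variable [DirectSum.Decomposition W]

lemma IsFrobeniusProduct.eq_of_eq_on_degree_one_of_eq_on_degree_two
    (hbot : ∀ p, 4 < p → W p = ⊥) (h₀ : W 0 = Submodule.span R {e₀})
    {m m' : V →ₗ[R] V →ₗ[R] V}
    (hm : IsFrobeniusProduct W B e₀ m) (hm' : IsFrobeniusProduct W B e₀ m')
    (h₁ : ∀ u ∈ W 1, m u = m' u) (h₂ : ∀ u ∈ W 2, ∀ v ∈ W 2, m u v = m' u v) : m = m' := by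
  have hlow : ∀ p ≤ 1, ∀ u ∈ W p, m u = m' u := by
    intro p hp u hu
    obtain rfl | rfl := Nat.le_one_iff_eq_zero_or_eq_one.mp hp
    · obtain ⟨c, rfl⟩ := Submodule.mem_span_singleton.mp (h₀.le hu)
      ext v
      simp [hm.one_mul, hm'.one_mul]
    · exact h₁ u hu
  refine DirectSum.decompose_lhom_ext W fun p => LinearMap.ext fun u =>
    DirectSum.decompose_lhom_ext W fun q => LinearMap.ext fun v => ?_
  change m u v = m' u v
  obtain hp | hq | ⟨rfl, rfl⟩ | hpq : p ≤ 1 ∨ q ≤ 1 ∨ (p = 2 ∧ q = 2) ∨ 4 < p + q := by omega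
  · rw [hlow p hp u u.2]
  · rw [hm.comm, hm'.comm, hlow q hq v v.2]
  · exact h₂ u u.2 v v.2
  · have h := hm.mul_mem p q u u.2 v v.2
    have h' := hm'.mul_mem p q u u.2 v v.2
    rw [hbot _ hpq, Submodule.mem_bot] at h h'
    rw [h, h']

variable {L : V →ₗ[R] Module.End R V}

/-- The product `u * v = L u v + L v u - L u (L v e₀) + B u₂ v₂ • e₀s` of weight four, where `u₂`
and `v₂` are the components of degree two. The subtracted term is the common part of the first
two. -/
def quarticProduct (W : ℕ → Submodule R V) [DirectSum.Decomposition W]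
    (B : LinearMap.BilinForm R V) (e₀ e₀s : V) (L : V →ₗ[R] Module.End R V) :
    V →ₗ[R] V →ₗ[R] V :=
  LinearMap.mk₂ R
    (fun u v => L u v + L v u - L u (L v e₀) +
      B (DirectSum.decompose W u 2) (DirectSum.decompose W v 2) • e₀s)
    (fun _ _ _ => by
      simp only [map_add, LinearMap.add_apply, DirectSum.decompose_add, DirectSum.add_apply,
        Submodule.coe_add]
      module)
    (fun _ _ _ => by
      simp only [map_smul, LinearMap.smul_apply, DirectSum.decompose_smul, DirectSum.smul_apply,
        Submodule.coe_smul, smul_eq_mul]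
      module)
    (fun _ _ _ => by
      simp only [map_add, LinearMap.add_apply, DirectSum.decompose_add, DirectSum.add_apply,
        Submodule.coe_add]
      module)
    (fun _ _ _ => by
      simp only [map_smul, LinearMap.smul_apply, DirectSum.decompose_smul, DirectSum.smul_apply,
        Submodule.coe_smul, smul_eq_mul]
      module)

lemma quarticProduct_apply (u v : V) :
    quarticProduct W B e₀ e₀s L u v = L u v + L v u - L u (L v e₀) +
      B (DirectSum.decompose W u 2) (DirectSum.decompose W v 2) • e₀s :=
  rfl

namespace IsLowDegreeAction

lemma quarticProduct_comm (hL : IsLowDegreeAction W B e₀ L) (hB : B.IsSymm) (u v : V) :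
    quarticProduct W B e₀ e₀s L u v = quarticProduct W B e₀ e₀s L v u := by
  have hcomm : L u (L v e₀) = L v (L u e₀) := LinearMap.congr_fun (hL.commute u v) e₀
  rw [quarticProduct_apply, quarticProduct_apply, hcomm, hB.eq, add_comm (L u v)]

lemma quarticProduct_of_le_one (hL : IsLowDegreeAction W B e₀ L) {p : ℕ} (hp : p ≤ 1) {u : V}
    (hu : u ∈ W p) (v : V) : quarticProduct W B e₀ e₀s L u v = L u v := by
  have hcomm : L u (L v e₀) = L v (L u e₀) := LinearMap.congr_fun (hL.commute u v) e₀
  rw [quarticProduct_apply, hcomm, hL.apply_unit p hp u hu,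
    DirectSum.decompose_of_mem_ne W hu (by omega), LinearMap.map_zero₂, zero_smul, add_zero,
    add_sub_cancel_right]

lemma quarticProduct_unit (hL : IsLowDegreeAction W B e₀ L) (he₀ : e₀ ∈ W 0) (v : V) :
    quarticProduct W B e₀ e₀s L e₀ v = v := by
  rw [hL.quarticProduct_of_le_one zero_le_one he₀, hL.map_unit, Module.End.one_apply]

lemma quarticProduct_of_two_le (hL : IsLowDegreeAction W B e₀ L) {p q : ℕ} (hp : 2 ≤ p)
    (hq : 2 ≤ q) {u v : V} (hu : u ∈ W p) (hv : v ∈ W q) :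
    quarticProduct W B e₀ e₀s L u v =
      B (DirectSum.decompose W u 2) (DirectSum.decompose W v 2) • e₀s := by
  simp [quarticProduct_apply, hL.eq_zero p hp u hu, hL.eq_zero q hq v hv]

lemma quarticProduct_of_mem_two (hL : IsLowDegreeAction W B e₀ L) {u v : V} (hu : u ∈ W 2)
    (hv : v ∈ W 2) : quarticProduct W B e₀ e₀s L u v = B u v • e₀s := by
  rw [hL.quarticProduct_of_two_le le_rfl le_rfl hu hv, DirectSum.decompose_of_mem_same W hu,
    DirectSum.decompose_of_mem_same W hv]

lemma quarticProduct_eq_zero (hL : IsLowDegreeAction W B e₀ L) {p q : ℕ} (hp : 2 ≤ p)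
    (hq : 2 ≤ q) (hpq : 4 < p + q) {u v : V} (hu : u ∈ W p) (hv : v ∈ W q) :
    quarticProduct W B e₀ e₀s L u v = 0 := by
  rw [hL.quarticProduct_of_two_le hp hq hu hv]
  obtain hp₂ | hq₂ : p ≠ 2 ∨ q ≠ 2 := by omega
  · simp [DirectSum.decompose_of_mem_ne W hu hp₂]
  · simp [DirectSum.decompose_of_mem_ne W hv hq₂]

lemma quarticProduct_mem (hL : IsLowDegreeAction W B e₀ L) (hB : B.IsSymm) (he₀s : e₀s ∈ W 4)
    {p q : ℕ} {u v : V} (hu : u ∈ W p) (hv : v ∈ W q) :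
    quarticProduct W B e₀ e₀s L u v ∈ W (p + q) := by
  obtain hp | hq | ⟨rfl, rfl⟩ | ⟨hp, hq, hpq⟩ :
      p ≤ 1 ∨ q ≤ 1 ∨ (p = 2 ∧ q = 2) ∨ (2 ≤ p ∧ 2 ≤ q ∧ 4 < p + q) := by omega
  · rw [hL.quarticProduct_of_le_one hp hu]
    exact hL.map_mem p q u hu v hv
  · rw [hL.quarticProduct_comm hB, hL.quarticProduct_of_le_one hq hv, add_comm]
    exact hL.map_mem q p v hv u hu
  · rw [hL.quarticProduct_of_mem_two hu hv]
    exact (W 4).smul_mem _ he₀s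
  · rw [hL.quarticProduct_eq_zero hp hq hpq hu hv]
    exact zero_mem _

lemma apply_quarticProduct_unit (hL : IsLowDegreeAction W B e₀ L) (hB : IsGradedPairing 4 W B)
    (hpair : B e₀ e₀s = 1) (u v : V) : B (quarticProduct W B e₀ e₀s L u v) e₀ = B u v := by
  have hlow : ∀ p ≤ 1, ∀ u ∈ W p, ∀ v, B (quarticProduct W B e₀ e₀s L u v) e₀ = B u v := by
    intro p hp u hu v
    rw [hL.quarticProduct_of_le_one hp hu, hL.isSelfAdjoint u, hL.apply_unit p hp u hu,
      hB.symm.eq]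
  induction u using DirectSum.Decomposition.inductionOn W with
  | zero => simp
  | add x y hx hy => simp [hx, hy]
  | @homogeneous p u =>
  induction v using DirectSum.Decomposition.inductionOn W with
  | zero => simp
  | add x y hx hy => simp [hx, hy]
  | @homogeneous q v =>
  obtain hp | hq | ⟨rfl, rfl⟩ | ⟨hp, hq, hpq⟩ :
      p ≤ 1 ∨ q ≤ 1 ∨ (p = 2 ∧ q = 2) ∨ (2 ≤ p ∧ 2 ≤ q ∧ 4 < p + q) := by omega
  · exact hlow p hp u u.2 v
  · rw [hL.quarticProduct_comm hB.symm, hlow q hq v v.2, hB.symm.eq]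
  · simp [hL.quarticProduct_of_mem_two u.2 v.2, hB.symm.eq e₀s, hpair]
  · rw [hL.quarticProduct_eq_zero hp hq hpq u.2 v.2, LinearMap.map_zero₂,
      hB.orthogonal p q hpq.ne' u u.2 v v.2]

lemma quarticProduct_assoc_of_le_one (hL : IsLowDegreeAction W B e₀ L) (hB : B.IsSymm)
    {p s : ℕ} (hp : p ≤ 1) (hs : s ≤ 1) {u w : V} (hu : u ∈ W p) (hw : w ∈ W s) (v : V) :
    quarticProduct W B e₀ e₀s L (quarticProduct W B e₀ e₀s L u v) w =
      quarticProduct W B e₀ e₀s L u (quarticProduct W B e₀ e₀s L v w) := by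
  have hcomm : L w (L u v) = L u (L w v) := LinearMap.congr_fun (hL.commute w u) v
  rw [hL.quarticProduct_comm hB _ w, hL.quarticProduct_comm hB v w]
  simpa only [hL.quarticProduct_of_le_one hp hu, hL.quarticProduct_of_le_one hs hw] using hcomm

lemma quarticProduct_assoc_one_one_two (hL : IsLowDegreeAction W B e₀ L)
    (hB : IsGradedPairing 4 W B) (h₀ : W 0 = Submodule.span R {e₀}) (he₀s : e₀s ∈ W 4)
    (hpair : B e₀ e₀s = 1) {u v w : V} (hu : u ∈ W 1) (hv : v ∈ W 1) (hw : w ∈ W 2) :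
    quarticProduct W B e₀ e₀s L (quarticProduct W B e₀ e₀s L u v) w =
      quarticProduct W B e₀ e₀s L u (quarticProduct W B e₀ e₀s L v w) := by
  have hcomm : L u (L v w) = L v (L u w) := LinearMap.congr_fun (hL.commute u v) w
  have htop : L u (L v w) ∈ W 4 := hL.map_mem 1 3 u hu _ (hL.map_mem 1 2 v hv w hw)
  have hB' : B (L u v) w = B (L u (L v w)) e₀ := by
    rw [hcomm, hL.isSelfAdjoint v, hL.apply_unit 1 le_rfl v hv, hL.isSelfAdjoint u, hB.symm.eq]
  simp only [hL.quarticProduct_of_le_one le_rfl hu, hL.quarticProduct_of_le_one le_rfl hv]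
  rw [hL.quarticProduct_of_mem_two (hL.map_mem 1 1 u hu v hv) hw, hB']
  exact (hB.eq_smul_of_mem_top h₀ he₀s hpair htop).symm

lemma quarticProduct_assoc_of_mem (hL : IsLowDegreeAction W B e₀ L)
    (hB : IsGradedPairing 4 W B) (h₀ : W 0 = Submodule.span R {e₀}) (he₀s : e₀s ∈ W 4)
    (hpair : B e₀ e₀s = 1) {p q s : ℕ} {u v w : V} (hu : u ∈ W p) (hv : v ∈ W q) (hw : w ∈ W s) :
    quarticProduct W B e₀ e₀s L (quarticProduct W B e₀ e₀s L u v) w =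
      quarticProduct W B e₀ e₀s L u (quarticProduct W B e₀ e₀s L v w) := by
  have hcomm := hL.quarticProduct_comm (e₀s := e₀s) hB.symm
  have hunit := hL.quarticProduct_unit (e₀s := e₀s) (h₀.ge (Submodule.mem_span_singleton_self e₀))
  have hmem {p q : ℕ} {u v : V} (hu : u ∈ W p) (hv : v ∈ W q) :=
    hL.quarticProduct_mem hB.symm he₀s hu hv
  obtain ⟨hp, hs⟩ | rfl | rfl | rfl | ⟨rfl, rfl, rfl⟩ | ⟨rfl, rfl, rfl⟩ | hd :
      (p ≤ 1 ∧ s ≤ 1) ∨ p = 0 ∨ q = 0 ∨ s = 0 ∨ (p = 1 ∧ q = 1 ∧ s = 2) ∨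
        (p = 2 ∧ q = 1 ∧ s = 1) ∨ 4 < p + q + s := by omega
  · exact hL.quarticProduct_assoc_of_le_one hB.symm hp hs hu hw v
  · obtain ⟨c, rfl⟩ := Submodule.mem_span_singleton.mp (h₀.le hu)
    simp [hunit]
  · obtain ⟨c, rfl⟩ := Submodule.mem_span_singleton.mp (h₀.le hv)
    simp [hunit, hcomm u e₀]
  · obtain ⟨c, rfl⟩ := Submodule.mem_span_singleton.mp (h₀.le hw)
    simp [hunit, hcomm _ e₀]
  · exact hL.quarticProduct_assoc_one_one_two hB h₀ he₀s hpair hu hv hw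
  · rw [hcomm _ w, hcomm u v, hcomm v w, hcomm u]
    exact (hL.quarticProduct_assoc_one_one_two hB h₀ he₀s hpair hw hv hu).symm
  · have hl := hmem (hmem hu hv) hw
    have hr := hmem hu (hmem hv hw)
    rw [← add_assoc] at hr
    rw [hB.eq_bot_of_lt hd, Submodule.mem_bot] at hl hr
    rw [hl, hr]

lemma quarticProduct_assoc (hL : IsLowDegreeAction W B e₀ L) (hB : IsGradedPairing 4 W B)
    (h₀ : W 0 = Submodule.span R {e₀}) (he₀s : e₀s ∈ W 4) (hpair : B e₀ e₀s = 1) (u v w : V) :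
    quarticProduct W B e₀ e₀s L (quarticProduct W B e₀ e₀s L u v) w =
      quarticProduct W B e₀ e₀s L u (quarticProduct W B e₀ e₀s L v w) := by
  induction u using DirectSum.Decomposition.inductionOn W with
  | zero => simp
  | add x y hx hy => simp [hx, hy]
  | homogeneous u =>
  induction v using DirectSum.Decomposition.inductionOn W with
  | zero => simp
  | add x y hx hy => simp [hx, hy]
  | homogeneous v =>
  induction w using DirectSum.Decomposition.inductionOn W with
  | zero => simp
  | add x y hx hy => simp [hx, hy]
  | homogeneous w => exact hL.quarticProduct_assoc_of_mem hB h₀ he₀s hpair u.2 v.2 w.2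

lemma isFrobeniusProduct_quarticProduct (hL : IsLowDegreeAction W B e₀ L)
    (hB : IsGradedPairing 4 W B) (h₀ : W 0 = Submodule.span R {e₀}) (he₀s : e₀s ∈ W 4)
    (hpair : B e₀ e₀s = 1) : IsFrobeniusProduct W B e₀ (quarticProduct W B e₀ e₀s L) where
  comm := hL.quarticProduct_comm hB.symm
  assoc := hL.quarticProduct_assoc hB h₀ he₀s hpair
  one_mul := hL.quarticProduct_unit (h₀.ge (Submodule.mem_span_singleton_self e₀))
  frob u v w := by
    rw [← hL.apply_quarticProduct_unit hB hpair, hL.quarticProduct_assoc hB h₀ he₀s hpair,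
      hL.apply_quarticProduct_unit hB hpair]
  mul_mem _ _ _ hu _ hv := hL.quarticProduct_mem hB.symm he₀s hu hv

end IsLowDegreeAction

variable {ι : Type*} {N : ι → Module.End R V}

lemma existsUnique_isFrobeniusProduct (hB : IsGradedPairing 4 W B)
    (h₀ : W 0 = Submodule.span R {e₀}) (he₀s : e₀s ∈ W 4) (hpair : B e₀ e₀s = 1)
    (hcomm : ∀ i j, Commute (N i) (N j)) (hdeg : ∀ j p, ∀ v ∈ W p, N j v ∈ W (p + 1))
    (hadj : ∀ j, B.IsSelfAdjoint (N j)) (hli : LinearIndependent R fun j => N j e₀)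
    (hspan : Submodule.span R (Set.range fun j => N j e₀) = W 1) :
    ∃! mul : V →ₗ[R] V →ₗ[R] V, IsFrobeniusProduct W B e₀ mul ∧
      (∀ j v, mul (N j e₀) v = N j v) ∧ ∀ u ∈ W 2, ∀ v ∈ W 2, mul u v = B u v • e₀s := by
  let b : Basis ι R (W 1) := (Basis.span hli).map (LinearEquiv.ofEq _ _ hspan)
  have hb (j : ι) : N j e₀ = b j := by simp [b, Basis.span_apply]
  have hε : ∀ p ≠ 0, ∀ u ∈ W p, B.flip e₀s u = 0 := fun p hp u hu =>
    hB.orthogonal p 4 (by omega) u hu e₀s he₀s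
  have hL : IsLowDegreeAction W B e₀ (lowDegreeAction (B.flip e₀s) b N) :=
    isLowDegreeAction_lowDegreeAction h₀ hpair hε hb hcomm hdeg hadj
  let mul := quarticProduct W B e₀ e₀s (lowDegreeAction (B.flip e₀s) b N)
  have hmul : IsFrobeniusProduct W B e₀ mul :=
    hL.isFrobeniusProduct_quarticProduct hB h₀ he₀s hpair
  have hmulN (j : ι) (v : V) : mul (N j e₀) v = N j v := by
    rw [hb, hL.quarticProduct_of_le_one le_rfl (b j).2,
      lowDegreeAction_basis (hε 1 one_ne_zero)]
  refine ⟨mul, ⟨hmul, hmulN, fun u hu v hv => hL.quarticProduct_of_mem_two hu hv⟩, ?_⟩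
  rintro m ⟨hm, hmN, hm₂⟩
  refine hm.eq_of_eq_on_degree_one_of_eq_on_degree_two (fun _ => hB.eq_bot_of_lt) h₀ hmul
    (fun u hu => LinearMap.eqOn_span ?_ (hspan.ge hu)) fun u hu v hv => ?_
  · rintro _ ⟨j, rfl⟩
    exact LinearMap.ext fun v => (hmN j v).trans (hmulN j v).symm
  · rw [hm₂ u hu v hv, hL.quarticProduct_of_mem_two hu hv]

end FrobeniusProduct

lemma isGradedFrobenius_iff {V : Type*} [AddCommGroup V] [Module ℂ V] [FiniteDimensional ℂ V]
    {k : ℕ} {W : ℕ → Submodule ℂ V} {B : V →ₗ[ℂ] V →ₗ[ℂ] ℂ} {e₀ : V}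
    {mul : V →ₗ[ℂ] V →ₗ[ℂ] V} (hW : DirectSum.IsInternal W) (hB : IsGradedPairing k W B)
    (hdim : Module.finrank ℂ (W 0) = 1) (he₀ : e₀ ∈ W 0) :
    IsGradedFrobenius k W mul e₀ B ↔ IsFrobeniusProduct W B e₀ mul := by
  let := hW.chooseDecomposition
  refine ⟨fun h => ⟨h.comm, h.assoc, h.one_mul, h.frob, h.mul_mem⟩, fun h => ?_⟩
  exact
    { h with
      finite := inferInstance
      symm := hB.symm.eq
      nondeg := hB.separatingLeft
      internal := hW
      bounded := fun _ => hB.eq_bot_of_lt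
      dim_bottom := hdim
      unit_mem := he₀
      orthogonal := hB.orthogonal }

theorem statement4_general {R V ι : Type*} [CommRing R] [AddCommGroup V] [Module R V]
    {U : ℕ → Submodule R V} (hU : DirectSum.IsInternal U)
    {Q : LinearMap.BilinForm R V} (hQ : IsGradedPairing 4 U Q)
    {N : ι → Module.End R V} (hNcomm : ∀ i j, Commute (N i) (N j))
    (hNdeg : ∀ j p, ∀ v ∈ U (p + 1), N j v ∈ U p) (hNbot : ∀ j, ∀ v ∈ U 0, N j v = 0)
    (hNskew : ∀ j, Q.IsSkewAdjoint (N j))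
    {e₀ e₀s : V} (he₀ : U 4 = Submodule.span R {e₀}) (he₀s : e₀s ∈ U 0) (hpair : Q e₀ e₀s = 1)
    (hli : LinearIndependent R fun j => N j e₀)
    (hspan : Submodule.span R (Set.range fun j => N j e₀) = U 3)
    {B : LinearMap.BilinForm R V} (hBQ : IsSignTwist (reverseGrading 4 U) Q B) :
    DirectSum.IsInternal (reverseGrading 4 U) ∧ IsGradedPairing 4 (reverseGrading 4 U) B ∧
      ∃! mul : V →ₗ[R] V →ₗ[R] V, IsFrobeniusProduct (reverseGrading 4 U) B e₀ mul ∧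
        (∀ j v, mul (N j e₀) v = N j v) ∧
        ∀ v₁ ∈ U 2, ∀ v₂ ∈ U 2, mul v₁ v₂ = B v₁ v₂ • e₀s := by
  let := hU.chooseDecomposition
  have hW : DirectSum.IsInternal (reverseGrading 4 U) :=
    isInternal_reverseGrading hU fun _ => hQ.eq_bot_of_lt
  let := hW.chooseDecomposition
  have hB : IsGradedPairing 4 (reverseGrading 4 U) B :=
    hBQ.isGradedPairing (by decide) hQ.reverseGrading
  have hdeg (j : ι) (p : ℕ) (v : V) (hv : v ∈ reverseGrading 4 U p) :
      N j v ∈ reverseGrading 4 U (p + 1) := map_mem_reverseGrading (hNdeg j) (hNbot j) hv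
  have hpairB : B e₀ e₀s = 1 := by
    rw [hBQ 0 e₀ (he₀.ge (Submodule.mem_span_singleton_self e₀)), pow_zero, one_mul, hpair]
  exact ⟨hW, hB, existsUnique_isFrobeniusProduct hB he₀ he₀s hpairB hNcomm hdeg
    (fun j => hBQ.isSelfAdjoint (hdeg j) (hNskew j)) hli hspan⟩

/-- Proposition `prop:constant_prod_from_nilpotent`: Let `V = ⊕_{p=0}^4 V^p`
(`Vup p` plays the role of `V^p`), `Q` a nondegenerate symmetric bilinear form with
`Q(V^p, V^q) = 0` for `p + q ≠ 4`, and `N₁,…,N_r` pairwise commuting endomorphisms with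
`N_j(V^p) ⊆ V^{p−1}` (`V^{−1} = 0`) which are infinitesimal isometries of `Q`.  Assume
`dim V^4 = 1`, fix `0 ≠ e₀ ∈ V^4` and `e₀* ∈ V^0` with `Q(e₀,e₀*) = 1`, and assume
`N₁(e₀),…,N_r(e₀)` form a basis of `V^3`.  Give `V` the grading `V_{2a} := V^{4−a}` and let
`B(u,v) := (−1)^a Q(u,v)` for `u ∈ V_{2a}`.  Then there is a unique product `*` on `V` making
`(V,*,e₀,B)` a graded Frobenius algebra of weight `4` with `N_j(e₀) * v = N_j(v)` and
`v₁ * v₂ = B(v₁,v₂) e₀*` for `v₁, v₂ ∈ V^2`. -/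
theorem statement4 {V : Type*} [AddCommGroup V] [Module ℂ V] [FiniteDimensional ℂ V]
    (r : ℕ) (Vup : ℕ → Submodule ℂ V)
    (hinternal : DirectSum.IsInternal Vup)
    (hbounded : ∀ p : ℕ, 4 < p → Vup p = ⊥)
    (Q : V →ₗ[ℂ] V →ₗ[ℂ] ℂ)
    (hQsymm : ∀ u v : V, Q u v = Q v u)
    (hQnondeg : ∀ u : V, (∀ v : V, Q u v = 0) → u = 0)
    (hQorth : ∀ p q : ℕ, p + q ≠ 4 → ∀ u ∈ Vup p, ∀ v ∈ Vup q, Q u v = 0)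
    (N : Fin r → (V →ₗ[ℂ] V))
    (hNcomm : ∀ i j, ∀ v : V, N i (N j v) = N j (N i v))
    (hNdeg : ∀ j, ∀ p : ℕ, ∀ v ∈ Vup (p + 1), N j v ∈ Vup p)
    (hNbot : ∀ j, ∀ v ∈ Vup 0, N j v = 0)
    (hNinf : ∀ j, ∀ u v : V, Q (N j u) v + Q u (N j v) = 0)
    (hdim4 : Module.finrank ℂ (Vup 4) = 1)
    (e₀ : V) (he₀ : e₀ ∈ Vup 4) (he₀ne : e₀ ≠ 0)
    (e₀s : V) (he₀s : e₀s ∈ Vup 0) (hpair : Q e₀ e₀s = 1)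
    (hbasis₁ : LinearIndependent ℂ (fun j : Fin r => N j e₀))
    (hbasis₂ : Submodule.span ℂ (Set.range fun j : Fin r => N j e₀) = Vup 3)
    -- `B` is the form `B(u,v) = (−1)^a Q(u,v)` for `u ∈ V_{2a} = V^{4−a}`
    (B : V →ₗ[ℂ] V →ₗ[ℂ] ℂ)
    (hB : ∀ a : Fin 5, ∀ u ∈ Vup (4 - (a : ℕ)), ∀ v : V,
      B u v = (-1 : ℂ) ^ (a : ℕ) * Q u v) :
    ∃! mul : V →ₗ[ℂ] V →ₗ[ℂ] V,
      IsGradedFrobenius 4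
        (fun a : ℕ => if a ≤ 4 then Vup (4 - a) else ⊥) mul e₀ B ∧
      (∀ j : Fin r, ∀ v : V, mul (N j e₀) v = N j v) ∧
      (∀ v₁ ∈ Vup 2, ∀ v₂ ∈ Vup 2, mul v₁ v₂ = B v₁ v₂ • e₀s) := by
  have hQ : IsGradedPairing 4 Vup Q := ⟨⟨hQsymm⟩, hQnondeg, hQorth⟩
  have hspan₄ : Vup 4 = Submodule.span ℂ {e₀} :=
    eq_span_singleton_of_mem_of_finrank_eq_one hdim4 he₀ he₀ne
  obtain ⟨hW, hBpairing, hmul⟩ := statement4_general hinternal hQ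
    (fun i j => LinearMap.ext (hNcomm i j)) hNdeg hNbot
    (fun j u v => by simpa using eq_neg_of_add_eq_zero_left (hNinf j u v))
    hspan₄ he₀s hpair hbasis₁ hbasis₂ (isSignTwist_reverseGrading_iff.mpr hB)
  simpa only [← isGradedFrobenius_iff hW hBpairing hdim4 he₀] using! hmul
end
end

section
/- Let V be a finite-dimensional ℂ-vector space, N₁,…,N_n ∈ End(V) pairwise commuting endomorphisms, U ⊆ ℂ^n open and connected, and H : U → End(V) holomorphic. Say that a holomorphic map X : U → End(V) satisfies condition (C) if for all 1 ≤ α,β ≤ n: ∂_αX·N_β − ∂_βX·N_α + N_α·∂_βX − N_β·∂_αX + ∂_αX·∂_βH − ∂_βX·∂_αH = 0 identically on U (products are compositions in End(V), ∂_α denotes the partial derivative in the α-th coordinate). Suppose H satisfies (C) and A : U → End(V) is holomorphic and satisfies (C). Then: (i) the End(V)-valued 1-form with components ω_α := A·N_α − N_α·A + A·∂_αH is closed, i.e. ∂_αω_β = ∂_βω_α on U for all α,β; and (ii) any holomorphic F : U → End(V) with ∂_αF = ω_α for all α also satisfies condition (C). -/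
open Module

noncomputable section

/-- Condition (C) for a holomorphic map `X : U → End(V)` relative to commuting endomorphisms
`N₁,…,N_n` and a map `H : U → End(V)`:  for all `1 ≤ α, β ≤ n`,
`∂_αX·N_β − ∂_βX·N_α + N_α·∂_βX − N_β·∂_αX + ∂_αX·∂_βH − ∂_βX·∂_αH = 0` on `U`
(products are compositions in `End(V)`). -/
def CondC {V : Type*} [NormedAddCommGroup V] [NormedSpace ℂ V] (n : ℕ)
    (U : Set (Fin n → ℂ)) (N : Fin n → (V →L[ℂ] V))
    (H : (Fin n → ℂ) → (V →L[ℂ] V)) (X : (Fin n → ℂ) → (V →L[ℂ] V)) : Prop :=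
  ∀ α β : Fin n, ∀ u ∈ U,
    fderiv ℂ X u (Pi.single α 1) * N β - fderiv ℂ X u (Pi.single β 1) * N α +
      N α * fderiv ℂ X u (Pi.single β 1) - N β * fderiv ℂ X u (Pi.single α 1) +
      fderiv ℂ X u (Pi.single α 1) * fderiv ℂ H u (Pi.single β 1) -
      fderiv ℂ X u (Pi.single β 1) * fderiv ℂ H u (Pi.single α 1) = 0

/-!
Write `Θ` for the constant form with values `N_α`, so that (C) reads
`dX ∧ Θ + Θ ∧ dX + dX ∧ dH = 0`. By the Leibniz rule and `d(dH) = 0`, the left-hand side of (C) for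
`A` is `dω`. If moreover `dF = ω` then, since the `N_α` commute, the left-hand side of (C) for `F`
is `A` times the left-hand side of (C) for `H`.

The analytic input is that `d(dH)` exists and vanishes for a Fréchet-holomorphic `H`. By the Cauchy
estimate `fderiv ℂ H` is locally Lipschitz, so the difference quotients of `H` in a direction `v`
converge uniformly on small balls to `D_v H`; by Weierstrass' theorem `D_v H` is holomorphic and
`D_w (D_v H)` is the limit of the difference quotients of `D_w H` in the direction `v`, which is
`D_v (D_w H)`.
-/

open Filter Metric Set
open scoped Topology NNReal

lemma exists_ball_subset_lipschitzOnWith {X Y : Type*} [PseudoMetricSpace X] [PseudoEMetricSpace Y]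
    {f : X → Y} {U : Set X} (hf : LocallyLipschitzOn U f) (hU : IsOpen U) {x : X} (hx : x ∈ U) :
    ∃ R > 0, ∃ K, ball x R ⊆ U ∧ LipschitzOnWith K f (ball x R) := by
  obtain ⟨K, t, ht, hK⟩ := hf hx
  rw [hU.nhdsWithin_eq hx] at ht
  obtain ⟨R, hR, hball⟩ := Metric.mem_nhds_iff.mp (inter_mem ht (hU.mem_nhds hx))
  exact ⟨R, hR, K, fun y hy => (hball hy).2, hK.mono fun y hy => (hball hy).1⟩

section Holomorphic

variable {E G : Type*} [NormedAddCommGroup E] [NormedSpace ℂ E]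
  [NormedAddCommGroup G] [NormedSpace ℂ G]

lemma norm_fderiv_le_two_mul_div_of_norm_le {f : E → G} {c : E} {R M : ℝ} (hR : 0 < R)
    (hf : DifferentiableOn ℂ f (ball c R)) (hM : ∀ z ∈ ball c R, ‖f z‖ ≤ M) :
    ‖fderiv ℂ f c‖ ≤ 2 * M / R := by
  refine Complex.norm_fderiv_le_div_of_mapsTo_ball hf (fun z hz => ?_) hR
  rw [mem_closedBall, dist_eq_norm]
  linarith [norm_sub_le (f z) (f c), hM z hz, hM c (mem_ball_self hR)]

lemma locallyLipschitzOn_of_differentiableOn {f : E → G} {U : Set E} (hU : IsOpen U)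
    (hf : DifferentiableOn ℂ f U) : LocallyLipschitzOn U f := by
  intro x hx
  have hbdd : ∀ᶠ y in 𝓝 x, y ∈ U ∧ ‖f y‖ < ‖f x‖ + 1 :=
    (hU.eventually_mem hx).and <| (hf.continuousOn.continuousAt (hU.mem_nhds hx)).norm.eventually
      (eventually_lt_nhds (lt_add_one _))
  obtain ⟨R, hR, hball⟩ := eventually_nhds_iff_ball.mp hbdd
  have hdiff : DifferentiableOn ℂ f (ball x R) := hf.mono fun y hy => (hball y hy).1
  have hsub : ∀ y ∈ ball x (R / 2), ball y (R / 2) ⊆ ball x R := fun y hy =>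
    ball_subset_ball' (by linarith [mem_ball.mp hy])
  have hderiv : ∀ y ∈ ball x (R / 2),
      ‖fderiv ℂ f y‖₊ ≤ (2 * (‖f x‖ + 1) / (R / 2)).toNNReal := fun y hy =>
    NNReal.le_toNNReal_of_coe_le <| norm_fderiv_le_two_mul_div_of_norm_le (half_pos hR)
      (hdiff.mono (hsub y hy)) fun z hz => (hball z (hsub y hy hz)).2.le
  refine ⟨_, ball x (R / 2), mem_nhdsWithin_of_mem_nhds (ball_mem_nhds x (half_pos hR)),
    (convex_ball x _).lipschitzOnWith_of_nnnorm_fderiv_le (𝕜 := ℂ) (fun y hy => ?_) hderiv⟩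
  exact hdiff.differentiableAt (isOpen_ball.mem_nhds (ball_subset_ball (by linarith) hy))

/- The Cauchy estimate is applied to the increment `z ↦ f (z + (w - y)) - f z`, which the Lipschitz
bound for `f` controls by `‖w - y‖`. -/
lemma locallyLipschitzOn_fderiv_of_differentiableOn {f : E → G} {U : Set E} (hU : IsOpen U)
    (hf : DifferentiableOn ℂ f U) : LocallyLipschitzOn U (fderiv ℂ f) := by
  intro x hx
  obtain ⟨R, hR, K, hRU, hK⟩ :=
    exists_ball_subset_lipschitzOnWith (locallyLipschitzOn_of_differentiableOn hU hf) hU hx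
  have hdiff : ∀ y ∈ ball x R, DifferentiableAt ℂ f y := fun y hy =>
    hf.differentiableAt (hU.mem_nhds (hRU hy))
  refine ⟨(2 * K / (R / 4)).toNNReal, ball x (R / 4),
    mem_nhdsWithin_of_mem_nhds (ball_mem_nhds x (by positivity)),
    LipschitzOnWith.of_dist_le_mul fun w hw y hy => ?_⟩
  have hmem : ∀ z ∈ ball y (R / 4), z ∈ ball x R ∧ z + (w - y) ∈ ball x R := by
    intro z hz
    rw [mem_ball] at hz hw hy
    have hshift : dist (z + (w - y)) x ≤ dist z y + dist w x := by
      simpa only [dist_eq_norm, show z + (w - y) - x = (z - y) + (w - x) by abel]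
        using norm_add_le (z - y) (w - x)
    exact ⟨mem_ball.mpr (by linarith [dist_triangle z y x]), mem_ball.mpr (by linarith)⟩
  have hincr : ∀ z ∈ ball y (R / 4), ‖f (z + (w - y)) - f z‖ ≤ K * ‖w - y‖ := fun z hz => by
    simpa only [dist_eq_norm, add_sub_cancel_left] using
      hK.dist_le_mul _ (hmem z hz).2 _ (hmem z hz).1
  have hdincr : ∀ z ∈ ball y (R / 4), HasFDerivAt (fun z => f (z + (w - y)) - f z)
      (fderiv ℂ f (z + (w - y)) - fderiv ℂ f z) z := fun z hz =>
    ((hasFDerivAt_comp_add_right _).mpr (hdiff _ (hmem z hz).2).hasFDerivAt).sub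
      (hdiff _ (hmem z hz).1).hasFDerivAt
  have hcauchy := norm_fderiv_le_two_mul_div_of_norm_le (by positivity : 0 < R / 4)
    (fun z hz => (hdincr z hz).differentiableAt.differentiableWithinAt) hincr
  rw [(hdincr y (mem_ball_self (by positivity))).fderiv, add_sub_cancel] at hcauchy
  rw [dist_eq_norm, dist_eq_norm, Real.coe_toNNReal _ (by positivity)]
  exact hcauchy.trans_eq (by ring)

end Holomorphic

section Slope

variable {𝕜 E G : Type*} [RCLike 𝕜] [NormedAddCommGroup E] [NormedSpace 𝕜 E]
  [NormedAddCommGroup G] [NormedSpace 𝕜 G] {f : E → G}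

lemma eventually_norm_smul_lt (v : E) {δ : ℝ} (hδ : 0 < δ) : ∀ᶠ t : 𝕜 in 𝓝[≠] 0, ‖t • v‖ < δ := by
  have hcont : Continuous fun t : 𝕜 => ‖t • v‖ := by fun_prop
  exact (hcont.tendsto' 0 0 (by simp)).mono_left nhdsWithin_le_nhds
    |>.eventually (eventually_lt_nhds hδ)

lemma norm_slope_sub_fderiv_apply_le {u v : E} {t : 𝕜} {η : ℝ} (ht : t ≠ 0)
    (hf : ∀ y ∈ closedBall u ‖t • v‖, DifferentiableAt 𝕜 f y)
    (hη : ∀ y ∈ closedBall u ‖t • v‖, ‖fderiv 𝕜 f y - fderiv 𝕜 f u‖ ≤ η) :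
    ‖t⁻¹ • (f (u + t • v) - f u) - fderiv 𝕜 f u v‖ ≤ η * ‖v‖ := by
  let : NormedSpace ℝ E := NormedSpace.restrictScalars ℝ 𝕜 E
  have hmean : ‖f (u + t • v) - f u - fderiv 𝕜 f u (t • v)‖ ≤ η * ‖t • v‖ := by
    simpa only [add_sub_cancel_left] using
      (convex_closedBall u ‖t • v‖).norm_image_sub_le_of_norm_fderiv_le' hf hη
        (mem_closedBall_self (norm_nonneg _)) (show u + t • v ∈ _ by simp)
  calc ‖t⁻¹ • (f (u + t • v) - f u) - fderiv 𝕜 f u v‖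
      = ‖t‖⁻¹ * ‖f (u + t • v) - f u - fderiv 𝕜 f u (t • v)‖ := by
        rw [← norm_inv, ← norm_smul, smul_sub t⁻¹ (_ - _), map_smul, inv_smul_smul₀ ht]
    _ ≤ ‖t‖⁻¹ * (η * ‖t • v‖) := by gcongr
    _ = η * ‖v‖ := by
        have : ‖t‖ ≠ 0 := norm_ne_zero_iff.mpr ht
        rw [norm_smul]
        field_simp

lemma tendstoUniformlyOn_slope_of_uniformContinuousOn_fderiv {x : E} {r R : ℝ} (hrR : r < R)
    (hf : ∀ y ∈ ball x R, DifferentiableAt 𝕜 f y)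
    (hf' : UniformContinuousOn (fderiv 𝕜 f) (ball x R)) (v : E) :
    TendstoUniformlyOn (fun (t : 𝕜) u => t⁻¹ • (f (u + t • v) - f u)) (fun u => fderiv 𝕜 f u v)
      (𝓝[≠] 0) (ball x r) := by
  rw [Metric.tendstoUniformlyOn_iff]
  intro ε hε
  obtain ⟨δ, hδ, hunif⟩ :=
    Metric.uniformContinuousOn_iff_le.mp hf' (ε / (‖v‖ + 1)) (by positivity)
  filter_upwards [self_mem_nhdsWithin, eventually_norm_smul_lt v hδ,
    eventually_norm_smul_lt v (sub_pos.mpr hrR)] with t ht htδ htR u hu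
  have hsub : closedBall u ‖t • v‖ ⊆ ball x R :=
    closedBall_subset_ball' (by linarith [mem_ball.mp hu])
  have hosc : ∀ y ∈ closedBall u ‖t • v‖, ‖fderiv 𝕜 f y - fderiv 𝕜 f u‖ ≤ ε / (‖v‖ + 1) :=
    fun y hy => by
      simpa only [dist_eq_norm] using hunif y (hsub hy) u
        (hsub (mem_closedBall_self (norm_nonneg _))) ((mem_closedBall.mp hy).trans htδ.le)
  calc dist (fderiv 𝕜 f u v) (t⁻¹ • (f (u + t • v) - f u))
      ≤ ε / (‖v‖ + 1) * ‖v‖ := by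
        rw [dist_comm, dist_eq_norm]
        exact norm_slope_sub_fderiv_apply_le ht (fun y hy => hf y (hsub hy)) hosc
    _ < ε / (‖v‖ + 1) * (‖v‖ + 1) := by gcongr; exact lt_add_one _
    _ = ε := div_mul_cancel₀ _ (by positivity)

end Slope

section Weierstrass

variable {E G ι : Type*} [NormedAddCommGroup E] [NormedSpace ℂ E]
  [NormedAddCommGroup G] [NormedSpace ℂ G] {l : Filter ι} {F : ι → E → G} {x : E} {r R : ℝ}

lemma uniformCauchySeqOn_fderiv (hrR : r < R)
    (hF : ∀ᶠ n in l, DifferentiableOn ℂ (F n) (ball x R))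
    (hcauchy : UniformCauchySeqOn F l (ball x R)) :
    UniformCauchySeqOn (fun n => fderiv ℂ (F n)) l (ball x r) := by
  have hρ : 0 < R - r := sub_pos.mpr hrR
  intro s hs
  obtain ⟨ε, hε, hεs⟩ := Metric.mem_uniformity_dist.mp hs
  filter_upwards [hcauchy _ (Metric.dist_mem_uniformity (by positivity : 0 < ε * (R - r) / 4)),
    hF.prod_mk hF] with ⟨m, n⟩ hmn ⟨hm, hn⟩ y hy
  have hsub : ball y (R - r) ⊆ ball x R := ball_subset_ball' (by linarith [mem_ball.mp hy])
  have hbound := norm_fderiv_le_two_mul_div_of_norm_le hρ ((hm.sub hn).mono hsub)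
    fun z hz => by simpa only [dist_eq_norm, Pi.sub_apply] using (hmn z (hsub hz)).le
  have hy_nhds : ball x R ∈ 𝓝 y := isOpen_ball.mem_nhds (hsub (mem_ball_self hρ))
  rw [fderiv_sub (hm.differentiableAt hy_nhds) (hn.differentiableAt hy_nhds)] at hbound
  refine hεs ((dist_eq_norm _ _).trans_lt (hbound.trans_lt ?_))
  rw [div_lt_iff₀ hρ]
  linarith [mul_pos hε hρ]

lemma exists_hasFDerivAt_tendsto_fderiv_of_tendstoUniformlyOn [CompleteSpace G] [NeBot l]
    {f : E → G} (hR : 0 < R) (hF : ∀ᶠ n in l, DifferentiableOn ℂ (F n) (ball x R))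
    (hf : TendstoUniformlyOn F f l (ball x R)) :
    ∃ f' : E →L[ℂ] G, HasFDerivAt f f' x ∧ Tendsto (fun n => fderiv ℂ (F n) x) l (𝓝 f') := by
  have hcauchy := uniformCauchySeqOn_fderiv (half_lt_self hR) hF hf.uniformCauchySeqOn
  choose! g hg using fun y (hy : y ∈ ball x (R / 2)) =>
    cauchy_map_iff_exists_tendsto.mp (hcauchy.cauchy_map hy)
  have hunif := hcauchy.tendstoUniformlyOn_of_tendsto hg
  have hunif_nhds : TendstoUniformlyOnFilter (fun n => fderiv ℂ (F n)) g l (𝓝 x) :=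
    hunif.tendstoUniformlyOnFilter.mono_right
      (le_principal_iff.mpr (ball_mem_nhds x (half_pos hR)))
  have hderiv : ∀ᶠ p : ι × E in l ×ˢ 𝓝 x, HasFDerivAt (F p.1) (fderiv ℂ (F p.1) p.2) p.2 := by
    filter_upwards [hF.prod_mk (isOpen_ball.eventually_mem (mem_ball_self hR))] with ⟨n, y⟩ ⟨hn, hy⟩
    exact (hn.differentiableAt (isOpen_ball.mem_nhds hy)).hasFDerivAt
  have hlim : ∀ᶠ y in 𝓝 x, Tendsto (fun n => F n y) l (𝓝 (f y)) := by
    filter_upwards [ball_mem_nhds x hR] with y hy using hf.tendsto_at hy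
  exact ⟨g x, hasFDerivAt_of_tendstoUniformlyOnFilter hunif_nhds hderiv hlim,
    hg x (mem_ball_self (half_pos hR))⟩

end Weierstrass

section MixedPartials

variable {E G : Type*} [NormedAddCommGroup E] [NormedSpace ℂ E] [NormedAddCommGroup G]
  [NormedSpace ℂ G] [CompleteSpace G] {f : E → G} {U : Set E} {x : E}

lemma exists_hasFDerivAt_fderiv_apply (hU : IsOpen U) (hf : DifferentiableOn ℂ f U) (hx : x ∈ U)
    (v : E) : ∃ L : E →L[ℂ] G, HasFDerivAt (fun u => fderiv ℂ f u v) L x ∧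
      Tendsto (fun t : ℂ => t⁻¹ • (fderiv ℂ f (x + t • v) - fderiv ℂ f x)) (𝓝[≠] 0) (𝓝 L) := by
  obtain ⟨R, hR, K, hRU, hK⟩ := exists_ball_subset_lipschitzOnWith
    (locallyLipschitzOn_fderiv_of_differentiableOn hU hf) hU hx
  have hdiff : ∀ y ∈ ball x R, DifferentiableAt ℂ f y := fun y hy =>
    hf.differentiableAt (hU.mem_nhds (hRU hy))
  have hshift : ∀ᶠ t : ℂ in 𝓝[≠] 0, ∀ u ∈ ball x (R / 2), u + t • v ∈ ball x R := by
    filter_upwards [eventually_norm_smul_lt v (half_pos hR)] with t ht u hu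
    have := dist_triangle (u + t • v) u x
    rw [dist_self_add_left] at this
    exact mem_ball.mpr (by linarith [mem_ball.mp hu])
  have hslope : ∀ᶠ t : ℂ in 𝓝[≠] 0, ∀ u ∈ ball x (R / 2),
      HasFDerivAt (fun u => t⁻¹ • (f (u + t • v) - f u))
        (t⁻¹ • (fderiv ℂ f (u + t • v) - fderiv ℂ f u)) u := by
    filter_upwards [hshift] with t ht u hu
    exact (((hasFDerivAt_comp_add_right _).mpr (hdiff _ (ht u hu)).hasFDerivAt).sub
      (hdiff u (ball_subset_ball (by linarith) hu)).hasFDerivAt).const_smul _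
  obtain ⟨L, hL, hlim⟩ := exists_hasFDerivAt_tendsto_fderiv_of_tendstoUniformlyOn (half_pos hR)
    (hslope.mono fun t ht u hu => (ht u hu).differentiableAt.differentiableWithinAt)
    (tendstoUniformlyOn_slope_of_uniformContinuousOn_fderiv (half_lt_self hR) hdiff
      hK.uniformContinuousOn v)
  refine ⟨L, hL, hlim.congr' ?_⟩
  filter_upwards [hslope] with t ht using (ht x (mem_ball_self (half_pos hR))).fderiv

lemma differentiableAt_fderiv_apply (hU : IsOpen U) (hf : DifferentiableOn ℂ f U) (hx : x ∈ U)
    (v : E) : DifferentiableAt ℂ (fun u => fderiv ℂ f u v) x :=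
  let ⟨_, hL, _⟩ := exists_hasFDerivAt_fderiv_apply hU hf hx v
  hL.differentiableAt

lemma fderiv_fderiv_apply_comm (hU : IsOpen U) (hf : DifferentiableOn ℂ f U) (hx : x ∈ U)
    (v w : E) :
    fderiv ℂ (fun u => fderiv ℂ f u v) x w = fderiv ℂ (fun u => fderiv ℂ f u w) x v := by
  obtain ⟨L, hL, hlim⟩ := exists_hasFDerivAt_fderiv_apply hU hf hx v
  have hw := (differentiableAt_fderiv_apply hU hf hx w).hasFDerivAt.hasLineDerivAt v
  rw [hL.fderiv]
  exact tendsto_nhds_unique (((ContinuousLinearMap.apply ℂ G w).continuous.tendsto L).comp hlim)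
    hw.tendsto_slope_zero

end MixedPartials

section IntegrabilityCondition

/-- The value of the 2-form `dX ∧ Θ + Θ ∧ dX + dX ∧ dH` on a pair of vectors, as a function of the
values `N₁, N₂` of `Θ`, `H₁, H₂` of `dH` and `X₁, X₂` of `dX` on these vectors. -/
def integrabilityDefect {R : Type*} [NonUnitalNonAssocRing R] (N₁ N₂ H₁ H₂ X₁ X₂ : R) : R :=
  X₁ * N₂ - X₂ * N₁ + N₁ * X₂ - N₂ * X₁ + X₁ * H₂ - X₂ * H₁

lemma integrabilityDefect_commutator_add_mul {R : Type*} [NonUnitalRing R] {N₁ N₂ : R}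
    (hN : Commute N₁ N₂) (A H₁ H₂ : R) :
    integrabilityDefect N₁ N₂ H₁ H₂ (A * N₁ - N₁ * A + A * H₁) (A * N₂ - N₂ * A + A * H₂) =
      A * integrabilityDefect N₁ N₂ H₁ H₂ H₁ H₂ := by
  have hleft : N₁ * (N₂ * A) = N₂ * (N₁ * A) := by rw [← mul_assoc, hN.eq, mul_assoc]
  simp only [integrabilityDefect, mul_add, mul_sub, add_mul, sub_mul, mul_assoc, hleft, hN.eq]
  abel

variable {E 𝔸 ι : Type*} [NormedAddCommGroup E] [NormedSpace ℂ E] [NormedRing 𝔸]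
  [NormedAlgebra ℂ 𝔸]

/-- Condition (C) for maps into a normed algebra, tested on the pairs of vectors from a family `e`,
where `N α` is the value of `Θ` on `e α`. For the standard basis of `ℂⁿ` and the algebra `End(V)` it
unfolds to `CondC`. -/
def IntegrableAlong (e : ι → E) (U : Set E) (N : ι → 𝔸) (H X : E → 𝔸) : Prop :=
  ∀ α β, ∀ u ∈ U, integrabilityDefect (N α) (N β) (fderiv ℂ H u (e α)) (fderiv ℂ H u (e β))
    (fderiv ℂ X u (e α)) (fderiv ℂ X u (e β)) = 0

lemma fderiv_commutator_add_mul_apply {A K : E → 𝔸} {u : E} (hA : DifferentiableAt ℂ A u)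
    (hK : DifferentiableAt ℂ K u) (N : 𝔸) (v : E) :
    fderiv ℂ (fun u => A u * N - N * A u + A u * K u) u v =
      fderiv ℂ A u v * N - N * fderiv ℂ A u v + fderiv ℂ A u v * K u + A u * fderiv ℂ K u v := by
  have hderiv : HasFDerivAt (fun u => A u * N - N * A u + A u * K u) _ u :=
    ((hA.hasFDerivAt.mul_const' N).sub (hA.hasFDerivAt.const_mul N)).add
      (hA.hasFDerivAt.mul' hK.hasFDerivAt)
  rw [hderiv.fderiv]
  simp only [add_apply, sub_apply, smul_apply, MulOpposite.smul_eq_mul_unop, MulOpposite.unop_op,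
    smul_eq_mul]
  abel

theorem statement6_general [CompleteSpace 𝔸] (e : ι → E) (N : ι → 𝔸)
    (hN : ∀ i j, Commute (N i) (N j)) {U : Set E} (hU : IsOpen U) {H A : E → 𝔸}
    (hH : DifferentiableOn ℂ H U) (hHC : IntegrableAlong e U N H H)
    (hA : DifferentiableOn ℂ A U) (hAC : IntegrableAlong e U N H A) {ω : ι → E → 𝔸}
    (hω : ∀ α, ∀ u ∈ U, ω α u = A u * N α - N α * A u + A u * fderiv ℂ H u (e α)) :
    (∀ α β, ∀ u ∈ U, fderiv ℂ (ω β) u (e α) = fderiv ℂ (ω α) u (e β)) ∧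
      ∀ F : E → 𝔸, DifferentiableOn ℂ F U → (∀ α, ∀ u ∈ U, fderiv ℂ F u (e α) = ω α u) →
        IntegrableAlong e U N H F := by
  refine ⟨fun α β u hu => ?_, fun F _ hF α β u hu => ?_⟩
  · have hfderiv : ∀ γ v, fderiv ℂ (ω γ) u v =
        fderiv ℂ A u v * N γ - N γ * fderiv ℂ A u v + fderiv ℂ A u v * fderiv ℂ H u (e γ) +
          A u * fderiv ℂ (fun u => fderiv ℂ H u (e γ)) u v := fun γ v => by
      rw [(eventuallyEq_of_mem (hU.mem_nhds hu) (hω γ)).fderiv_eq]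
      exact fderiv_commutator_add_mul_apply (hA.differentiableAt (hU.mem_nhds hu))
        (differentiableAt_fderiv_apply hU hH hu (e γ)) (N γ) v
    rw [hfderiv, hfderiv, fderiv_fderiv_apply_comm hU hH hu (e β) (e α), ← sub_eq_zero,
      ← hAC α β u hu, integrabilityDefect]
    abel
  · rw [hF α u hu, hF β u hu, hω α u hu, hω β u hu, integrabilityDefect_commutator_add_mul (hN α β),
      hHC α β u hu, mul_zero]

end IntegrabilityCondition

/-- the inductive step in the proof of Theorem `th:improved_2.8`: let `V` be a
finite-dimensional `ℂ`-vector space, `N₁,…,N_n` pairwise commuting endomorphisms,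
`U ⊆ ℂ^n` open and connected, and `H : U → End(V)` holomorphic satisfying condition (C).
If `A : U → End(V)` is holomorphic and satisfies (C), then:
(i) the `End(V)`-valued 1-form `ω_α := A·N_α − N_α·A + A·∂_αH` is closed
(`∂_αω_β = ∂_βω_α` on `U`), and
(ii) any holomorphic `F : U → End(V)` with `∂_αF = ω_α` for all `α` also satisfies (C). -/
theorem statement6 {V : Type*} [NormedAddCommGroup V] [NormedSpace ℂ V]
    [FiniteDimensional ℂ V]
    (n : ℕ) (N : Fin n → (V →L[ℂ] V))
    (hNcomm : ∀ i j, Commute (N i) (N j))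
    (U : Set (Fin n → ℂ)) (hUopen : IsOpen U) (hUconn : IsConnected U)
    (H : (Fin n → ℂ) → (V →L[ℂ] V))
    (hHhol : DifferentiableOn ℂ H U)
    (hHC : CondC n U N H H)
    (A : (Fin n → ℂ) → (V →L[ℂ] V))
    (hAhol : DifferentiableOn ℂ A U)
    (hAC : CondC n U N H A)
    -- the 1-form `ω_α = A·N_α − N_α·A + A·∂_αH`
    (ω : Fin n → (Fin n → ℂ) → (V →L[ℂ] V))
    (hω : ∀ α : Fin n, ∀ u : Fin n → ℂ,
      ω α u = A u * N α - N α * A u + A u * fderiv ℂ H u (Pi.single α 1)) :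
    (∀ α β : Fin n, ∀ u ∈ U,
      fderiv ℂ (ω β) u (Pi.single α 1) = fderiv ℂ (ω α) u (Pi.single β 1)) ∧
    (∀ F : (Fin n → ℂ) → (V →L[ℂ] V), DifferentiableOn ℂ F U →
      (∀ α : Fin n, ∀ u ∈ U, fderiv ℂ F u (Pi.single α 1) = ω α u) →
      CondC n U N H F) := by
  have : CompleteSpace V := FiniteDimensional.complete ℂ V
  exact statement6_general (fun α => Pi.single α 1) N hNcomm hUopen hHhol hHC hAhol hAC
    fun α u _ => hω α u
end
end

section
/- Let V = ⊕_{p=0}^4 V_{2p} be a finite-dimensional graded ℂ-vector space, B a nondegenerate symmetric bilinear form on V with B(V_{2p},V_{2q}) = 0 whenever p+q ≠ 4, and e₀ ∈ V₀. If *₁ and *₂ are two products on V such that both (V,*₁,e₀,B) and (V,*₂,e₀,B) are graded Frobenius algebras of weight 4, and w *₁ v = w *₂ v for every w ∈ V₂ and every v ∈ V, then *₁ = *₂; that is, a weight-4 graded Frobenius product is uniquely determined by B, the unit e₀, and the multiplication operators by elements of V₂. -/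
/-! The difference `d` of the two products is again commutative, graded and invariant, so the
trilinear form `(u, v, w) ↦ B (d u v) w` is symmetric. On arguments from `V_{2p}`, `V_{2q}`,
`V_{2r}` there are two cases. If one of `p, q, r` is at most `1`, that argument can be moved to the
front, where `d` vanishes (`V₀` is spanned by the unit). Otherwise `p + q + r ≥ 6 > 4`, so `d u v`
and `w` are orthogonal. Nondegeneracy of `B` gives `d = 0`. The same count works in weight `k` for
products that agree on `V_{2p}` for all `p < n`, as soon as `k < 3 n`. -/

open Module

noncomputable section

theorem linearMap_eq_zero_of_iSup_eq_top {R V M ι : Type*} [Semiring R] [AddCommMonoid V]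
    [Module R V] [AddCommMonoid M] [Module R M] {W : ι → Submodule R V} (hW : ⨆ i, W i = ⊤)
    {f : V →ₗ[R] M} (hf : ∀ i, ∀ u ∈ W i, f u = 0) : f = 0 := by
  rw [← LinearMap.ker_eq_top, eq_top_iff, ← hW]
  exact iSup_le hf

section GradedInvariantMul

variable {R V M : Type*} [CommRing R] [AddCommGroup V] [Module R V] [AddCommGroup M] [Module R M]

/-- A commutative multiplication on `V`, not assumed associative or unital, that is graded with
respect to `W` and invariant with respect to `B`. Unlike graded Frobenius products, these form a
linear space, so that two of them can be subtracted. -/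
structure IsGradedInvariantMul (W : ℕ → Submodule R V) (B : V →ₗ[R] V →ₗ[R] M)
    (mul : V →ₗ[R] V →ₗ[R] V) : Prop where
  comm : ∀ u v, mul u v = mul v u
  mul_mem : ∀ p q, ∀ u ∈ W p, ∀ v ∈ W q, mul u v ∈ W (p + q)
  invariant : ∀ u v w, B (mul u v) w = B u (mul v w)

namespace IsGradedInvariantMul

variable {W : ℕ → Submodule R V} {B : V →ₗ[R] V →ₗ[R] M} {mul mul₁ mul₂ : V →ₗ[R] V →ₗ[R] V}

theorem sub (h₁ : IsGradedInvariantMul W B mul₁) (h₂ : IsGradedInvariantMul W B mul₂) :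
    IsGradedInvariantMul W B (mul₁ - mul₂) where
  comm u v := by simp only [LinearMap.sub_apply, h₁.comm u v, h₂.comm u v]
  mul_mem p q u hu v hv := sub_mem (h₁.mul_mem p q u hu v hv) (h₂.mul_mem p q u hu v hv)
  invariant u v w := by
    simp only [LinearMap.sub_apply, map_sub, h₁.invariant u v w, h₂.invariant u v w]

theorem form_eq_zero_of_mem {k n : ℕ} (hkn : k < 3 * n) (h : IsGradedInvariantMul W B mul)
    (hB : ∀ p q, k < p + q → ∀ u ∈ W p, ∀ v ∈ W q, B u v = 0)
    (hmul : ∀ p < n, ∀ u ∈ W p, mul u = 0) {p q r : ℕ} {u v w : V}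
    (hu : u ∈ W p) (hv : v ∈ W q) (hw : w ∈ W r) : B (mul u v) w = 0 := by
  by_cases hp : p < n
  · simp [hmul p hp u hu]
  by_cases hq : q < n
  · simp [h.comm u v, hmul q hq v hv]
  by_cases hr : r < n
  · simp [h.invariant u v w, h.comm v w, hmul r hr w hw]
  have hdeg : k < p + q + r := by omega
  exact hB (p + q) r hdeg _ (h.mul_mem p q u hu v hv) w hw

theorem eq_zero_of_forall_degree_lt {k n : ℕ} (hkn : k < 3 * n) (h : IsGradedInvariantMul W B mul)
    (hW : ⨆ p, W p = ⊤) (hBsep : B.SeparatingLeft)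
    (hB : ∀ p q, k < p + q → ∀ u ∈ W p, ∀ v ∈ W q, B u v = 0)
    (hmul : ∀ p < n, ∀ u ∈ W p, mul u = 0) : mul = 0 := by
  refine linearMap_eq_zero_of_iSup_eq_top hW fun p u hu ↦
    linearMap_eq_zero_of_iSup_eq_top hW fun q v hv ↦ hBsep _ fun w ↦ ?_
  have hform : B (mul u v) = 0 := linearMap_eq_zero_of_iSup_eq_top hW fun r w hw ↦
    h.form_eq_zero_of_mem hkn hB hmul hu hv hw
  rw [hform, LinearMap.zero_apply]

end IsGradedInvariantMul

theorem statement18_general {k n : ℕ} (hkn : k < 3 * n) {W : ℕ → Submodule R V}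
    (hW : ⨆ p, W p = ⊤) {e₀ : V} (hW₀ : W 0 ≤ R ∙ e₀) {B : V →ₗ[R] V →ₗ[R] M}
    (hBsep : B.SeparatingLeft) (hB : ∀ p q, k < p + q → ∀ u ∈ W p, ∀ v ∈ W q, B u v = 0)
    {mul₁ mul₂ : V →ₗ[R] V →ₗ[R] V} (h₁ : IsGradedInvariantMul W B mul₁)
    (h₂ : IsGradedInvariantMul W B mul₂) (hone₁ : ∀ v, mul₁ e₀ v = v) (hone₂ : ∀ v, mul₂ e₀ v = v)
    (hagree : ∀ p, 0 < p → p < n → ∀ w ∈ W p, ∀ v, mul₁ w v = mul₂ w v) :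
    mul₁ = mul₂ := by
  refine sub_eq_zero.mp ((h₁.sub h₂).eq_zero_of_forall_degree_lt hkn hW hBsep hB
    fun p hp u hu ↦ ?_)
  ext v
  rw [LinearMap.sub_apply, LinearMap.sub_apply, LinearMap.zero_apply, sub_eq_zero]
  obtain rfl | hp₀ := Nat.eq_zero_or_pos p
  · obtain ⟨c, rfl⟩ := Submodule.mem_span_singleton.mp (hW₀ hu)
    simp only [map_smul, LinearMap.smul_apply, hone₁, hone₂]
  · exact hagree p hp₀ hp u hu v

end GradedInvariantMul

namespace IsGradedFrobenius

variable {V : Type*} [AddCommGroup V] [Module ℂ V] {k : ℕ} {W : ℕ → Submodule ℂ V}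
  {mul : V →ₗ[ℂ] V →ₗ[ℂ] V} {e₀ : V} {B : V →ₗ[ℂ] V →ₗ[ℂ] ℂ}

theorem isGradedInvariantMul (h : IsGradedFrobenius k W mul e₀ B) :
    IsGradedInvariantMul W B mul :=
  ⟨h.comm, h.mul_mem, h.frob⟩

theorem unit_ne_zero (h : IsGradedFrobenius k W mul e₀ B) : e₀ ≠ 0 := by
  rintro rfl
  have : Nontrivial (W 0) := nontrivial_of_finrank_eq_succ h.dim_bottom
  obtain ⟨u, hu⟩ := exists_ne (0 : W 0)
  refine hu (Subtype.ext ?_)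
  rw [← h.one_mul u, map_zero, LinearMap.zero_apply, ZeroMemClass.coe_zero]

theorem span_unit_eq (h : IsGradedFrobenius k W mul e₀ B) : ℂ ∙ e₀ = W 0 := by
  have := h.finite
  refine Submodule.eq_of_le_of_finrank_eq ?_ ?_
  · exact (Submodule.span_singleton_le_iff_mem e₀ (W 0)).mpr h.unit_mem
  · rw [finrank_span_singleton h.unit_ne_zero, h.dim_bottom]

end IsGradedFrobenius

/-- A weight-4 graded Frobenius product is determined by the bilinear form
`B`, the unit `e₀`, and the multiplication operators by elements of `V₂`: if `*₁` and `*₂`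
both make `(V, *ᵢ, e₀, B)` a graded Frobenius algebra of weight 4 (for the same grading) and
`w *₁ v = w *₂ v` for all `w ∈ V₂` and all `v ∈ V`, then `*₁ = *₂`. -/
theorem statement18 {V : Type*} [AddCommGroup V] [Module ℂ V]
    (W : ℕ → Submodule ℂ V) (e₀ : V) (B : V →ₗ[ℂ] V →ₗ[ℂ] ℂ)
    (mul₁ mul₂ : V →ₗ[ℂ] V →ₗ[ℂ] V)
    (hFrob₁ : IsGradedFrobenius 4 W mul₁ e₀ B)
    (hFrob₂ : IsGradedFrobenius 4 W mul₂ e₀ B)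
    (hagree : ∀ w ∈ W 1, ∀ v : V, mul₁ w v = mul₂ w v) :
    mul₁ = mul₂ := by
  exact statement18_general (k := 4) (n := 2) (by norm_num)
    hFrob₁.internal.submodule_iSup_eq_top hFrob₁.span_unit_eq.ge hFrob₁.nondeg
    (fun p q hpq ↦ hFrob₁.orthogonal p q hpq.ne') hFrob₁.isGradedInvariantMul
    hFrob₂.isGradedInvariantMul hFrob₁.one_mul hFrob₂.one_mul
    fun p hp₀ hp₂ ↦ (by omega : 1 = p) ▸ hagree
end
end
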